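/- arXiv:1808.01273 — 2 statements merged into one kernel-verified Lean document; each statement's English description precedes it below -/
import Mathlib

section
/- For every integer k ≥ 1 and every polynomial P on ℝ^k, one has ∫_{ℝ^k} B(|LP(x)|) dγ_k(x) ≤ ∫_{ℝ^k} B(10 · (deg P)^{α_B} · |P(x)|) dγ_k(x). -/
open MeasureTheory ProbabilityTheory Real

/-- The standard Gaussian measure on `ℝ^k`. -/
noncomputable def gaussMeasure (k : ℕ) : Measure (Fin k → ℝ) :=
  Measure.pi fun _ => gaussianReal 0 1

/-- The Ornstein–Uhlenbeck operator `L P (x) = Δ P (x) - x · ∇P (x)` applied to a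
polynomial on `ℝ^k`. -/
noncomputable def OU {k : ℕ} (P : MvPolynomial (Fin k) ℝ) (x : Fin k → ℝ) : ℝ :=
  (∑ j, MvPolynomial.eval x (MvPolynomial.pderiv j (MvPolynomial.pderiv j P)))
    - ∑ j, x j * MvPolynomial.eval x (MvPolynomial.pderiv j P)

/-- The lens-shaped region with vertices `0` and `1` whose half-angle `θ` at the vertices
satisfies `cot θ = κ`. -/
def lens (κ : ℝ) : Set ℂ := {w | κ * |w.im| ≤ w.re - Complex.normSq w}

/-- The exponent `1 + (2 / π) arctan κ` attached to `lens κ`. -/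
noncomputable def lensExponent (κ : ℝ) : ℝ := 1 + (2 / π) * Real.arctan κ

lemma one_le_lensExponent {κ : ℝ} (hκ : 0 ≤ κ) : 1 ≤ lensExponent κ := by
  have : 0 ≤ Real.arctan κ := by simpa using hκ
  unfold lensExponent
  have := pi_pos
  have : 0 ≤ (2 / π) * Real.arctan κ := by positivity
  linarith

lemma lensExponent_lt_two (κ : ℝ) : lensExponent κ < 2 := by
  have h := Real.arctan_lt_pi_div_two κ
  have hp := pi_pos
  have : (2 / π) * Real.arctan κ < (2 / π) * (π / 2) := by gcongr
  have e : (2 / π) * (π / 2) = 1 := by field_simp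
  unfold lensExponent; linarith

lemma lensExponent_mul_pi_div_two (κ : ℝ) :
    lensExponent κ * (π / 2) = π / 2 + Real.arctan κ := by
  unfold lensExponent; field_simp

lemma ofReal_mem_lens {κ t : ℝ} (h0 : 0 ≤ t) (h1 : t ≤ 1) : (t : ℂ) ∈ lens κ := by
  simp only [lens, Set.mem_ofPred_eq, Complex.ofReal_im, abs_zero, mul_zero, Complex.ofReal_re,
    Complex.normSq_ofReal]
  nlinarith

lemma inv_one_sub_mem_lens {κ : ℝ} {m : ℂ} (hm : κ * |m.im| ≤ -m.re) : (1 - m)⁻¹ ∈ lens κ := by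
  by_cases h : 1 - m = 0
  · simpa [h] using ofReal_mem_lens (κ := κ) le_rfl zero_le_one
  have hn : 0 < Complex.normSq (1 - m) := Complex.normSq_pos.2 h
  simp only [lens, Set.mem_ofPred_eq, Complex.inv_im, Complex.inv_re, Complex.normSq_inv, abs_div,
    abs_of_pos hn]
  simp only [Complex.sub_im, Complex.one_im, zero_sub, neg_neg, Complex.sub_re, Complex.one_re]
  rw [inv_eq_one_div, ← sub_div, mul_div_assoc']
  gcongr
  linarith

lemma mul_cos_arctan (κ : ℝ) : κ * Real.cos (Real.arctan κ) = Real.sin (Real.arctan κ) := by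
  have h := Real.tan_mul_cos (Real.cos_arctan_pos κ).ne'
  rwa [Real.tan_arctan] at h

lemma cpow_lensExponent_sector {κ : ℝ} (hκ : 0 ≤ κ) (y : ℝ) :
    κ * |(((y : ℂ) * Complex.I) ^ (lensExponent κ : ℂ)).im| ≤
      -(((y : ℂ) * Complex.I) ^ (lensExponent κ : ℂ)).re := by
  set α := lensExponent κ with hα
  have hα1 := one_le_lensExponent hκ
  rcases eq_or_ne y 0 with rfl | hy
  · have : (α : ℂ) ≠ 0 := by
      rw [Complex.ofReal_ne_zero]; linarith
    simp [Complex.zero_cpow this]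
  have hs : Real.sin (π / 2 * α) = Real.cos (Real.arctan κ) := by
    rw [mul_comm, lensExponent_mul_pi_div_two, add_comm, Real.sin_add_pi_div_two]
  have hc : Real.cos (π / 2 * α) = -Real.sin (Real.arctan κ) := by
    rw [mul_comm, lensExponent_mul_pi_div_two, add_comm, Real.cos_add_pi_div_two]
  have hcp := Real.cos_arctan_pos κ
  have ht := mul_cos_arctan κ
  rw [Complex.cpow_ofReal_im, Complex.cpow_ofReal_re]
  have harg : Real.sin (Complex.arg (y * Complex.I) * α) = Real.cos (Real.arctan κ) ∧
      Real.cos (Complex.arg (y * Complex.I) * α) = -Real.sin (Real.arctan κ) ∨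
      Real.sin (Complex.arg (y * Complex.I) * α) = -Real.cos (Real.arctan κ) ∧
      Real.cos (Complex.arg (y * Complex.I) * α) = -Real.sin (Real.arctan κ) := by
    rcases lt_or_gt_of_ne hy with h | h
    · right
      have : Complex.arg (y * Complex.I) = -(π / 2) := by
        rw [Complex.arg_eq_neg_pi_div_two_iff]; simp [h]
      rw [this, neg_mul, Real.sin_neg, Real.cos_neg, hs, hc]; simp
    · left
      have : Complex.arg (y * Complex.I) = π / 2 := by
        rw [Complex.arg_eq_pi_div_two_iff]; simp [h]
      rw [this, hs, hc]; simp
  have hn : 0 ≤ ‖(y * Complex.I : ℂ)‖ ^ α := by positivity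
  rcases harg with ⟨h1, h2⟩ | ⟨h1, h2⟩ <;> rw [h1, h2, abs_mul, abs_of_nonneg hn]
  · rw [abs_of_pos hcp]; nlinarith
  · rw [abs_neg, abs_of_pos hcp]; nlinarith

lemma arg_lt_of_not_sector {κ : ℝ} {m : ℂ} (hm : -m.re < κ * |m.im|) :
    |m.arg| < lensExponent κ * (π / 2) := by
  by_contra hcon
  push Not at hcon
  rw [lensExponent_mul_pi_div_two] at hcon
  set τ := Real.arctan κ with hτ
  have h1 := Complex.abs_arg_le_pi m
  have hcp : 0 < Real.cos τ := Real.cos_arctan_pos κ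
  have ht : κ * Real.cos τ = Real.sin τ := mul_cos_arctan κ
  have hτ1 := Real.arctan_lt_pi_div_two κ
  have hτ2 := Real.neg_pi_div_two_lt_arctan κ
  have hre : m.re = ‖m‖ * Real.cos |m.arg| := by
    rw [Real.cos_abs, Complex.norm_mul_cos_arg]
  have him : |m.im| = ‖m‖ * Real.sin |m.arg| := by
    rw [← Real.abs_sin_eq_sin_abs_of_abs_le_pi h1]
    conv_lhs => rw [← Complex.norm_mul_sin_arg m]
    rw [abs_mul, abs_of_nonneg (norm_nonneg m)]
  have hcos : Real.cos (|m.arg| - τ) ≤ 0 :=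
    Real.cos_nonpos_of_pi_div_two_le_of_le (by linarith) (by linarith)
  rw [Real.cos_sub] at hcos
  have : κ * |m.im| * Real.cos τ ≤ -m.re * Real.cos τ := by
    rw [him, hre]
    have := mul_nonneg (norm_nonneg m) (neg_nonneg.2 hcos)
    calc κ * (‖m‖ * Real.sin |m.arg|) * Real.cos τ
        = ‖m‖ * Real.sin |m.arg| * (κ * Real.cos τ) := by ring
      _ = ‖m‖ * Real.sin |m.arg| * Real.sin τ := by rw [ht]
      _ ≤ _ := by nlinarith
  have := le_of_mul_le_mul_right this hcp
  linarith

lemma cpow_ne_one {α : ℝ} (h0 : 0 < α) (h2 : α < 2) {ζ : ℂ} (hζ : 0 ≤ ζ.re) (h1 : ζ ≠ 1) :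
    ζ ^ (α : ℂ) ≠ 1 := by
  intro h
  have hn : ‖ζ‖ ^ α = 1 := by rw [← Complex.norm_cpow_real, h, norm_one]
  have hn1 : ‖ζ‖ = 1 := by
    rwa [← Real.one_rpow α, Real.rpow_left_inj (norm_nonneg _) zero_le_one h0.ne'] at hn
  have hre : Real.cos (ζ.arg * α) = 1 := by
    have := congrArg Complex.re h
    rwa [Complex.cpow_ofReal_re, hn1, Real.one_rpow, one_mul, Complex.one_re] at this
  have harg : |ζ.arg| ≤ π / 2 := Complex.abs_arg_le_pi_div_two_iff.2 hζ
  have hp := pi_pos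
  have hlt : |ζ.arg * α| < 2 * π := by
    rw [abs_mul, abs_of_pos h0]
    nlinarith [abs_nonneg ζ.arg]
  rw [abs_lt] at hlt
  have h3 := (Real.cos_eq_one_iff_of_lt_of_lt (by linarith) hlt.2).1 hre
  have h4 : ζ.arg = 0 := by
    rcases mul_eq_zero.1 h3 with h | h
    · exact h
    · exact absurd h h0.ne'
  apply h1
  rw [← Complex.norm_mul_exp_arg_mul_I ζ, hn1, h4]
  simp

lemma eval_reflect_eq {p : Polynomial ℂ} {d : ℕ} (hp : p.natDegree ≤ d) {x : ℂ} (hx : x ≠ 0) :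
    (p.reflect d).eval x = p.eval x⁻¹ * x ^ d := by
  let _ : Invertible x⁻¹ := invertibleOfNonzero (inv_ne_zero hx)
  have h := Polynomial.eval₂_reflect_mul_pow (RingHom.id ℂ) x⁻¹ d p hp
  simp only [invOf_eq_inv, inv_inv] at h
  change (p.reflect d).eval x * x⁻¹ ^ d = p.eval x⁻¹ at h
  rw [← h, mul_assoc, ← mul_pow, inv_mul_cancel₀ hx, one_pow, mul_one]

/-- Bernstein–Walsh type estimate in the exterior of the lens, in the coordinate `ζ` of the right
half-plane which uniformizes this exterior. -/
lemma bernstein_walsh_lens {κ : ℝ} (hκ : 0 ≤ κ) {p : Polynomial ℂ} {d : ℕ}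
    (hp : p.natDegree ≤ d) {K : ℝ} (hK : ∀ w ∈ lens κ, ‖p.eval w‖ ≤ K)
    {ζ : ℂ} (hζ : 0 ≤ ζ.re) (hζ1 : ζ ≠ 1) :
    ‖p.eval (1 - ζ ^ (lensExponent κ : ℂ))⁻¹‖ * ‖1 - ζ‖ ^ d ≤ K * ‖1 + ζ‖ ^ d := by
  set α := lensExponent κ with hα
  have hα1 : 1 ≤ α := one_le_lensExponent hκ
  have hα2 : α < 2 := lensExponent_lt_two κ
  have hα0 : 0 < α := by linarith
  set e : ℂ → ℂ := fun z => z ^ (α : ℂ) with he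
  have he1 : e 1 = 1 := by simp [he]
  have hed : ∀ z : ℂ, 0 < z.re → DifferentiableAt ℂ e z := fun z hz =>
    (differentiableAt_id).cpow_const (Or.inl hz)
  have hec : ∀ z : ℂ, 0 ≤ z.re → ContinuousAt e z := fun z hz =>
    Complex.continuousAt_cpow_const_of_re_pos (Or.inl hz) (by simpa using hα0)
  set q : ℂ → ℂ := dslope e 1 with hq
  have hopen : IsOpen {z : ℂ | 0 < z.re} := isOpen_lt continuous_const Complex.continuous_re
  have hqeq : ∀ z, z ≠ 1 → (1 - z) * q z = 1 - e z := by
    intro z hz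
    have : (z - 1) • q z = e z - e 1 := sub_smul_dslope e 1 z
    rw [he1, smul_eq_mul] at this
    linear_combination -this
  have hqd : DifferentiableOn ℂ q {z : ℂ | 0 < z.re} := by
    rw [hq, Complex.differentiableOn_dslope (hopen.mem_nhds (by simp))]
    exact fun z hz => (hed z hz).differentiableWithinAt
  have hqc : ∀ z : ℂ, 0 ≤ z.re → ContinuousAt q z := by
    intro z hz
    rcases eq_or_ne z 1 with rfl | h
    · exact (hqd.differentiableAt (hopen.mem_nhds (by simp))).continuousAt
    · exact (continuousAt_dslope_of_ne h).2 (hec z hz)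
  have hq0 : ∀ z : ℂ, 0 ≤ z.re → q z ≠ 0 := by
    intro z hz h0
    rcases eq_or_ne z 1 with rfl | h
    · have hd1 : HasDerivAt e ((α : ℂ) * 1 ^ ((α : ℂ) - 1) * 1) 1 :=
        (hasDerivAt_id (1 : ℂ)).cpow_const (Or.inl (by simp))
      rw [hq, dslope_same, hd1.deriv] at h0
      simp at h0
      linarith
    · have := hqeq z h
      rw [h0, mul_zero] at this
      exact cpow_ne_one hα0 hα2 hz h (sub_eq_zero.1 this.symm).symm
  have hadd : ∀ z : ℂ, 0 ≤ z.re → 1 + z ≠ 0 := by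
    intro z hz h
    have := congrArg Complex.re h
    simp at this
    linarith
  set G : ℂ → ℂ := fun z => (p.reflect d).eval (1 - e z) / (q z * (1 + z)) ^ d with hG
  have hGeq : ∀ z : ℂ, 0 ≤ z.re → z ≠ 1 →
      G z = p.eval (1 - e z)⁻¹ * ((1 - z) / (1 + z)) ^ d := by
    intro z hz h
    have h1 : 1 - e z ≠ 0 := fun h' => cpow_ne_one hα0 hα2 hz h (sub_eq_zero.1 h').symm
    have h2 := hq0 z hz
    have h3 := hadd z hz
    simp only [hG]
    rw [eval_reflect_eq hp h1, mul_div_assoc, ← div_pow]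
    congr 2
    rw [← hqeq z h]
    field_simp
  have hnorm : ∀ z : ℂ, 0 ≤ z.re → ‖(1 - z) / (1 + z)‖ ≤ 1 := by
    intro z hz
    rw [norm_div, div_le_one (norm_pos_iff.2 (hadd z hz))]
    rw [Complex.norm_def, Complex.norm_def]
    apply Real.sqrt_le_sqrt
    simp only [Complex.normSq_apply, Complex.sub_re, Complex.one_re, Complex.sub_im,
      Complex.one_im, Complex.add_re, Complex.add_im]
    nlinarith
  have hGc : ∀ z : ℂ, 0 ≤ z.re → ContinuousAt G z := by
    intro z hz
    refine ContinuousAt.div ?_ ?_ (pow_ne_zero _ (mul_ne_zero (hq0 z hz) (hadd z hz)))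
    · exact (p.reflect d).continuous.continuousAt.comp (continuousAt_const.sub (hec z hz))
    · exact ((hqc z hz).mul (by fun_prop)).pow d
  have hGd : DiffContOnCl ℂ G {z : ℂ | 0 < z.re} := by
    constructor
    · intro z hz
      have hz' : 0 ≤ z.re := le_of_lt hz
      apply DifferentiableAt.differentiableWithinAt
      refine DifferentiableAt.div ?_ ?_ (pow_ne_zero _ (mul_ne_zero (hq0 z hz') (hadd z hz')))
      · exact (p.reflect d).differentiable.differentiableAt.comp z
          ((differentiableAt_const _).sub (hed z hz))
      · exact ((hqd.differentiableAt (hopen.mem_nhds hz)).mul (by fun_prop)).pow d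
    · rw [Complex.closure_setOfPred_lt_re]
      exact fun z hz => (hGc z hz).continuousWithinAt
  obtain ⟨C, hC⟩ : ∃ C, ∀ z ∈ Metric.closedBall (0 : ℂ) 1, ‖p.eval z‖ ≤ C :=
    (isCompact_closedBall (0 : ℂ) 1).exists_bound_of_continuousOn p.continuous.continuousOn
  have hGb : ∀ z : ℂ, 0 ≤ z.re → 2 ≤ ‖z‖ → ‖G z‖ ≤ C := by
    intro z hz hz2
    have hz1 : z ≠ 1 := by rintro rfl; norm_num at hz2
    have h2 : 2 ≤ ‖e z‖ := by
      simp only [he]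
      rw [Complex.norm_cpow_real]
      calc (2 : ℝ) ≤ ‖z‖ := hz2
        _ = ‖z‖ ^ (1 : ℝ) := (Real.rpow_one _).symm
        _ ≤ ‖z‖ ^ α := Real.rpow_le_rpow_of_exponent_le (by linarith) hα1
    have h3 : 1 ≤ ‖1 - e z‖ := by
      have := norm_sub_norm_le (e z) 1
      rw [norm_one, norm_sub_rev] at this
      linarith
    have h4 : ‖p.eval (1 - e z)⁻¹‖ ≤ C := by
      apply hC
      rw [mem_closedBall_zero_iff, norm_inv]
      exact inv_le_one_of_one_le₀ h3
    rw [hGeq z hz hz1, norm_mul, norm_pow]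
    calc _ ≤ ‖p.eval (1 - e z)⁻¹‖ * 1 := by
          gcongr
          exact pow_le_one₀ (norm_nonneg _) (hnorm z hz)
      _ ≤ C := by simpa using h4
  have hmain : ‖G ζ‖ ≤ K := by
    refine PhragmenLindelof.right_half_plane_of_bounded_on_real hGd ⟨1, by norm_num, 0, ?_⟩ ?_ ?_ hζ
    · apply Asymptotics.IsBigO.of_bound C
      have h1 : ∀ᶠ z : ℂ in Bornology.cobounded ℂ, 2 ≤ ‖z‖ :=
        tendsto_norm_cobounded_atTop.eventually_ge_atTop 2
      filter_upwards [Filter.mem_inf_of_left h1, Filter.mem_inf_of_right (Filter.mem_principal_self _)]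
        with z hz hz'
      simpa using hGb z (le_of_lt hz') hz
    · refine ⟨C, ?_⟩
      rw [Filter.eventually_map]
      filter_upwards [Filter.eventually_ge_atTop (2 : ℝ)] with x hx
      apply hGb
      · simp; linarith
      · simp only [Complex.norm_real, Real.norm_eq_abs]
        exact hx.trans (le_abs_self x)
    · intro y
      have hre : ((y : ℂ) * Complex.I).re = 0 := by simp
      have hne : (y : ℂ) * Complex.I ≠ 1 := by
        intro h; rw [h] at hre; simp at hre
      rw [hGeq _ hre.ge hne, norm_mul, norm_pow]
      have hm := hK _ (inv_one_sub_mem_lens (cpow_lensExponent_sector hκ y))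
      calc _ ≤ ‖p.eval (1 - e (y * Complex.I))⁻¹‖ * 1 := by
            gcongr
            exact pow_le_one₀ (norm_nonneg _) (hnorm _ hre.ge)
        _ ≤ K := by simpa using hm
  rw [hGeq ζ hζ hζ1, norm_mul, norm_pow, norm_div, div_pow, mul_div_assoc',
    div_le_iff₀ (pow_pos (norm_pos_iff.2 (hadd ζ hζ)) d)] at hmain
  exact hmain

lemma one_add_div_one_sub_le_exp {ρ : ℝ} (h0 : 0 ≤ ρ) (h1 : ρ < 1) :
    (1 + ρ) / (1 - ρ) ≤ Real.exp (2 * ρ / (1 - ρ ^ 2)) := by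
  have h2 : 0 < 1 - ρ := by linarith
  have h3 : 0 < 1 + ρ := by linarith
  have hy : 0 < (1 + ρ) / (1 - ρ) := by positivity
  have hl : 0 ≤ Real.log ((1 + ρ) / (1 - ρ)) := by
    apply Real.log_nonneg
    rw [le_div_iff₀ h2]; linarith
  have h := Real.self_le_sinh_iff.2 hl
  rw [Real.sinh_log hy] at h
  have e : ((1 + ρ) / (1 - ρ) - ((1 + ρ) / (1 - ρ))⁻¹) / 2 = 2 * ρ / (1 - ρ ^ 2) := by
    have : 1 - ρ ^ 2 ≠ 0 := by nlinarith
    field_simp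
    ring
  rw [e] at h
  exact (Real.log_le_iff_le_exp hy).1 h

lemma one_add_div_one_sub_pow_le {d : ℕ} (hd : 4 ≤ d) :
    ((1 + 3 / (4 * d : ℝ)) / (1 - 3 / (4 * d : ℝ))) ^ d ≤ 49 / 10 := by
  have hd' : (4 : ℝ) ≤ d := by exact_mod_cast hd
  have hρ : 3 / (4 * d : ℝ) ≤ 3 / 16 := by
    rw [div_le_div_iff₀ (by positivity) (by norm_num)]; linarith
  have h0 : 0 ≤ 3 / (4 * d : ℝ) := by positivity
  calc _ ≤ Real.exp (2 * (3 / (4 * d : ℝ)) / (1 - (3 / (4 * d : ℝ)) ^ 2)) ^ d := by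
        gcongr
        · exact div_nonneg (by linarith) (by linarith)
        · exact one_add_div_one_sub_le_exp h0 (by linarith)
    _ = Real.exp (d * (2 * (3 / (4 * d : ℝ)) / (1 - (3 / (4 * d : ℝ)) ^ 2))) := by
        rw [← Real.exp_nat_mul]
    _ ≤ Real.exp (25 / 16) := by
        gcongr
        have e : d * (2 * (3 / (4 * d : ℝ)) / (1 - (3 / (4 * d : ℝ)) ^ 2)) =
            (3 / 2) / (1 - (3 / (4 * d : ℝ)) ^ 2) := by
          have : (d : ℝ) ≠ 0 := by positivity
          field_simp
          ring
        rw [e, div_le_iff₀ (by nlinarith)]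
        nlinarith
    _ ≤ 49 / 10 := by
        have h16 : Real.exp (25 / 16) ^ 16 ≤ (49 / 10 : ℝ) ^ 16 := by
          calc Real.exp (25 / 16) ^ 16 = Real.exp 1 ^ 25 := by
                rw [← Real.exp_nat_mul, ← Real.exp_nat_mul]; norm_num
            _ ≤ 2.7182818286 ^ 25 := by
                gcongr; exact Real.exp_one_lt_d9.le
            _ ≤ _ := by norm_num
        exact le_of_pow_le_pow_left₀ (by norm_num) (by norm_num) h16

lemma norm_eval_le_near_one {κ : ℝ} (hκ : 0 ≤ κ) {p : Polynomial ℂ} {d : ℕ}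
    (hp : p.natDegree ≤ d) {K : ℝ} (hK : ∀ w ∈ lens κ, ‖p.eval w‖ ≤ K) {ρ : ℝ}
    (hρ0 : 0 < ρ) (hρ1 : ρ < 1) {z : ℂ}
    (hz : ‖z - 1‖ ≤ ρ ^ lensExponent κ / (1 + ρ ^ lensExponent κ)) :
    ‖p.eval z‖ ≤ K * ((1 + ρ) / (1 - ρ)) ^ d := by
  set α := lensExponent κ with hα
  have hα1 : 1 ≤ α := one_le_lensExponent hκ
  have hα0 : 0 < α := by linarith
  have hK0 : 0 ≤ K :=
    (norm_nonneg _).trans (hK _ (ofReal_mem_lens (κ := κ) le_rfl zero_le_one))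
  have ha : 0 < ρ ^ α := Real.rpow_pos_of_pos hρ0 α
  set a := ρ ^ α with ha'
  have h1 : 1 ≤ (1 + ρ) / (1 - ρ) := by
    rw [le_div_iff₀ (by linarith)]; linarith
  have hzn : 1 - a / (1 + a) ≤ ‖z‖ := by
    have := norm_sub_norm_le 1 (1 - z)
    rw [norm_one, sub_sub_cancel, norm_sub_rev] at this
    linarith
  have hza : 1 - a / (1 + a) = 1 / (1 + a) := by field_simp; ring
  have hz0 : 0 < ‖z‖ := by
    have : 0 < 1 / (1 + a) := by positivity
    linarith
  have hz0' : z ≠ 0 := norm_pos_iff.1 hz0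
  set m := (z - 1) / z with hm
  have hzm : (1 - m)⁻¹ = z := by
    rw [hm]; field_simp; ring
  have hma : ‖m‖ ≤ a := by
    rw [hm, norm_div, div_le_iff₀ hz0]
    calc ‖z - 1‖ ≤ a / (1 + a) := hz
      _ = a * (1 / (1 + a)) := by ring
      _ ≤ a * ‖z‖ := by gcongr; linarith
  by_cases hsec : κ * |m.im| ≤ -m.re
  · have := hK _ (inv_one_sub_mem_lens hsec)
    rw [hzm] at this
    exact this.trans (le_mul_of_one_le_right hK0 (one_le_pow₀ h1))
  have harg := arg_lt_of_not_sector (not_le.1 hsec)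
  set ζ := m ^ ((α⁻¹ : ℝ) : ℂ) with hζ
  have hm0 : m ≠ 0 := by
    rintro h; apply hsec; simp [h]
  have him : (Complex.log m * ((α⁻¹ : ℝ) : ℂ)).im = m.arg * α⁻¹ := by
    rw [Complex.im_mul_ofReal, Complex.log_im]
  have habs : |m.arg * α⁻¹| < π / 2 := by
    rw [abs_mul, abs_of_pos (inv_pos.2 hα0), ← div_eq_mul_inv, div_lt_iff₀ hα0, mul_comm]
    exact harg
  have habs' := abs_lt.1 habs
  have hpi := pi_pos
  have hζα : ζ ^ (α : ℂ) = m := by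
    rw [hζ, ← Complex.cpow_mul _ (by rw [him]; linarith) (by rw [him]; linarith)]
    rw [← Complex.ofReal_mul, inv_mul_cancel₀ hα0.ne']
    simp
  have hζre : 0 ≤ ζ.re := by
    rw [hζ, Complex.cpow_ofReal_re]
    have := Real.cos_nonneg_of_neg_pi_div_two_le_of_le habs'.1.le habs'.2.le
    positivity
  have hζn : ‖ζ‖ ≤ ρ := by
    rw [hζ, Complex.norm_cpow_real]
    calc ‖m‖ ^ α⁻¹ ≤ a ^ α⁻¹ := by gcongr
      _ = ρ := by rw [ha', ← Real.rpow_mul hρ0.le, mul_inv_cancel₀ hα0.ne', Real.rpow_one]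
  have hζ1 : ζ ≠ 1 := by
    intro h; rw [h, norm_one] at hζn; linarith
  have hmain := bernstein_walsh_lens hκ hp hK hζre hζ1
  rw [← hα, hζα, hzm] at hmain
  have hs : 1 - ρ ≤ ‖1 - ζ‖ := by
    have := norm_sub_norm_le 1 ζ
    rw [norm_one] at this; linarith
  have hs' : ‖1 + ζ‖ ≤ 1 + ρ := by
    have := norm_add_le 1 ζ
    rw [norm_one] at this; linarith
  rw [div_pow, mul_div_assoc', le_div_iff₀ (pow_pos (by linarith) d)]
  calc ‖p.eval z‖ * (1 - ρ) ^ d ≤ ‖p.eval z‖ * ‖1 - ζ‖ ^ d := by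
        gcongr
    _ ≤ K * ‖1 + ζ‖ ^ d := hmain
    _ ≤ K * (1 + ρ) ^ d := by gcongr

/-- A Markov type inequality at the vertex `1` of a lens. -/
theorem markov_lens {κ : ℝ} (hκ : 0 ≤ κ) {p : Polynomial ℂ} {d : ℕ} (hd : 1 ≤ d)
    (hp : p.natDegree ≤ d) {K : ℝ} (hK : ∀ w ∈ lens κ, ‖p.eval w‖ ≤ K) :
    ‖p.derivative.eval 1‖ ≤ 10 * (d : ℝ) ^ lensExponent κ * K := by
  have hα1 : 1 ≤ lensExponent κ := one_le_lensExponent hκ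
  have hα2 := lensExponent_lt_two κ
  set α := lensExponent κ with hα
  have hK0 : 0 ≤ K :=
    (norm_nonneg _).trans (hK _ (ofReal_mem_lens (κ := κ) le_rfl zero_le_one))
  have hdα : (d : ℝ) ≤ (d : ℝ) ^ α := by
    conv_lhs => rw [← Real.rpow_one (d : ℝ)]
    exact Real.rpow_le_rpow_of_exponent_le (by exact_mod_cast hd) hα1
  have hpt : ∀ t : ℝ, 0 ≤ t → t ≤ 1 → ‖p.eval (t : ℂ)‖ ≤ K := fun t h0 h1 =>
    hK _ (ofReal_mem_lens h0 h1)
  rcases lt_or_ge d 4 with hd4 | hd4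
  · have heval : ∀ x : ℂ, p.eval x = ∑ i ∈ Finset.range 4, p.coeff i * x ^ i := fun x =>
      Polynomial.eval_eq_sum_range' (by omega) x
    have hder : p.derivative.eval 1 = p.coeff 1 + 2 * p.coeff 2 + 3 * p.coeff 3 := by
      rw [Polynomial.eval_eq_sum_range' (n := 4)
        (lt_of_le_of_lt (Polynomial.natDegree_derivative_le p) (by omega))]
      have : p.coeff 4 = 0 := Polynomial.coeff_eq_zero_of_natDegree_lt (by omega)
      simp [Finset.sum_range_succ, Polynomial.coeff_derivative, this]
      ring
    have h0 := hpt 0 (by norm_num) (by norm_num)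
    have h1 := hpt 1 (by norm_num) (by norm_num)
    rcases eq_or_lt_of_le hd with rfl | hd1
    · have hc2 : p.coeff 2 = 0 := Polynomial.coeff_eq_zero_of_natDegree_lt (by omega)
      have hc3 : p.coeff 3 = 0 := Polynomial.coeff_eq_zero_of_natDegree_lt (by omega)
      have e : p.derivative.eval 1 = p.eval ((1 : ℝ) : ℂ) - p.eval ((0 : ℝ) : ℂ) := by
        rw [hder, heval, heval]
        simp [Finset.sum_range_succ, hc2, hc3]
      rw [e]
      calc _ ≤ K + K := (norm_sub_le _ _).trans (add_le_add h1 h0)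
        _ ≤ _ := by simp; linarith
    · have h3 := hpt (3 / 4) (by norm_num) (by norm_num)
      have h2 := hpt (1 / 4) (by norm_num) (by norm_num)
      have e : p.derivative.eval 1 = (19 / 3 : ℝ) * p.eval ((1 : ℝ) : ℂ)
          - (8 : ℝ) * p.eval ((3 / 4 : ℝ) : ℂ) + (8 / 3 : ℝ) * p.eval ((1 / 4 : ℝ) : ℂ)
          - p.eval ((0 : ℝ) : ℂ) := by
        rw [hder, heval, heval, heval, heval]
        simp only [Finset.sum_range_succ, Finset.sum_range_zero]
        push_cast
        ring
      have hd2 : (2 : ℝ) ≤ d := by exact_mod_cast hd1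
      rw [e]
      calc _ ≤ 19 / 3 * K + 8 * K + 8 / 3 * K + K := by
            refine (norm_sub_le _ _).trans (add_le_add ?_ h0)
            refine (norm_add_le _ _).trans (add_le_add ?_ ?_)
            · refine (norm_sub_le _ _).trans (add_le_add ?_ ?_)
              · rw [norm_mul, Complex.norm_real, Real.norm_of_nonneg (by norm_num)]; gcongr
              · rw [norm_mul, Complex.norm_real, Real.norm_of_nonneg (by norm_num)]; gcongr
            · rw [norm_mul, Complex.norm_real, Real.norm_of_nonneg (by norm_num)]; gcongr
        _ ≤ _ := by nlinarith
  · have hd4' : (4 : ℝ) ≤ d := by exact_mod_cast hd4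
    set ρ : ℝ := 3 / (4 * d) with hρ
    have hρ0 : 0 < ρ := by positivity
    have hρ1 : ρ < 1 := by rw [hρ, div_lt_one (by positivity)]; linarith
    have ha : 0 < ρ ^ α := Real.rpow_pos_of_pos hρ0 α
    have hr : 0 < ρ ^ α / (1 + ρ ^ α) := by positivity
    have h := Complex.norm_deriv_le_of_forall_mem_sphere_norm_le (c := 1)
      (f := fun z => p.eval z) hr p.differentiable.diffContOnCl
      (C := K * (49 / 10)) (fun z hz => by
        refine (norm_eval_le_near_one hκ hp hK hρ0 hρ1 (z := z) ?_).trans ?_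
        · rw [mem_sphere_iff_norm] at hz
          exact hz.le
        · gcongr
          exact one_add_div_one_sub_pow_le hd4)
    rw [Polynomial.deriv] at h
    have hinv : (ρ ^ α)⁻¹ ≤ 16 / 9 * (d : ℝ) ^ α := by
      have e : ρ⁻¹ = 4 / 3 * d := by rw [hρ]; field_simp
      rw [← Real.inv_rpow hρ0.le, e, Real.mul_rpow (by norm_num) (by positivity)]
      gcongr
      calc (4 / 3 : ℝ) ^ α ≤ (4 / 3 : ℝ) ^ (2 : ℝ) :=
            Real.rpow_le_rpow_of_exponent_le (by norm_num) hα2.le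
        _ = 16 / 9 := by norm_num
    calc _ ≤ K * (49 / 10) / (ρ ^ α / (1 + ρ ^ α)) := h
      _ = K * (49 / 10) * ((ρ ^ α)⁻¹ + 1) := by field_simp
      _ ≤ K * (49 / 10) * (16 / 9 * (d : ℝ) ^ α + 1 / 4 * (d : ℝ) ^ α) := by
          gcongr; linarith
      _ ≤ _ := by nlinarith [mul_nonneg hK0 (by linarith : (0:ℝ) ≤ (d : ℝ) ^ α)]

/-- Dual form of `markov_lens`: the normalized functional `p ↦ p'(1)` lies in every closed convex
set containing the evaluations at the points of the lens. -/
theorem derivative_functional_mem {κ : ℝ} (hκ : 0 ≤ κ) {d : ℕ} (hd : 1 ≤ d)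
    {S : Set (Fin (d + 1) → ℂ)} (hconv : Convex ℝ S) (hcl : IsClosed S)
    (hS : ∀ w ∈ lens κ, ∀ σ : ℂ, ‖σ‖ ≤ 1 → (fun n : Fin (d + 1) => σ * w ^ (n : ℕ)) ∈ S) :
    (fun n : Fin (d + 1) => ((10 * (d : ℝ) ^ lensExponent κ)⁻¹ : ℝ) * (n : ℂ)) ∈ S := by
  set M : ℝ := 10 * (d : ℝ) ^ lensExponent κ with hM
  have hd0 : (0 : ℝ) < d := by exact_mod_cast hd
  have hM0 : 0 < M := by positivity
  by_contra hcon
  obtain ⟨f, u, hfS, hfu⟩ := RCLike.geometric_hahn_banach_closed_point (𝕜 := ℂ) hconv hcl hcon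
  have hf : ∀ y : Fin (d + 1) → ℂ, f y = ∑ n, y n * f (Pi.single n 1) := by
    intro y
    conv_lhs => rw [pi_eq_sum_univ' y]
    rw [map_sum]
    refine Finset.sum_congr rfl fun n _ => ?_
    rw [map_smul, smul_eq_mul]
  set p : Polynomial ℂ := ∑ n : Fin (d + 1),
    Polynomial.C (f (Pi.single n 1)) * Polynomial.X ^ (n : ℕ) with hp
  have hdeg : p.natDegree ≤ d := by
    refine Polynomial.natDegree_sum_le_of_forall_le _ _ fun n _ => ?_
    exact (Polynomial.natDegree_C_mul_X_pow_le _ _).trans (by omega)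
  have heval : ∀ w σ : ℂ, f (fun n => σ * w ^ (n : ℕ)) = σ * p.eval w := by
    intro w σ
    rw [hf, hp, Polynomial.eval_finsetSum, Finset.mul_sum]
    refine Finset.sum_congr rfl fun n _ => ?_
    simp only [Polynomial.eval_mul, Polynomial.eval_C, Polynomial.eval_pow, Polynomial.eval_X]
    ring
  have hder : p.derivative.eval 1 = f (fun n => (n : ℂ)) := by
    rw [hf, hp, Polynomial.derivative_sum, Polynomial.eval_finsetSum]
    refine Finset.sum_congr rfl fun n _ => ?_
    simp only [Polynomial.derivative_C_mul_X_pow, Polynomial.eval_mul, Polynomial.eval_C,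
      Polynomial.eval_pow, Polynomial.eval_X, one_pow, mul_one]
    ring
  have hbound : ∀ w ∈ lens κ, ‖p.eval w‖ ≤ u := by
    intro w hw
    set σ : ℂ := (starRingEnd ℂ) (p.eval w) / ‖p.eval w‖ with hσ
    have hσ1 : ‖σ‖ ≤ 1 := by
      rw [hσ, norm_div, RCLike.norm_conj, Complex.norm_real, norm_norm]
      exact div_self_le_one _
    have h := hfS _ (hS w hw σ hσ1)
    rw [heval] at h
    have e : σ * p.eval w = (‖p.eval w‖ : ℂ) := by
      rcases eq_or_ne (p.eval w) 0 with h0 | h0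
      · simp [h0]
      · have : (‖p.eval w‖ : ℂ) ≠ 0 := by simpa using h0
        rw [hσ, div_mul_eq_mul_div, div_eq_iff this, Complex.conj_mul', sq]
    rw [e] at h
    simpa using h.le
  have hmk := markov_lens hκ hd hdeg hbound
  rw [← hM, hder] at hmk
  have e : f (fun n : Fin (d + 1) => ((M⁻¹ : ℝ) : ℂ) * (n : ℂ)) =
      ((M⁻¹ : ℝ) : ℂ) * f (fun n => (n : ℂ)) := by
    rw [← smul_eq_mul, ← map_smul]; rfl
  rw [e] at hfu
  have h1 : RCLike.re (((M⁻¹ : ℝ) : ℂ) * f (fun n : Fin (d + 1) => (n : ℂ))) =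
      M⁻¹ * (f (fun n : Fin (d + 1) => (n : ℂ))).re := Complex.re_ofReal_mul _ _
  rw [h1] at hfu
  have h2 : (f (fun n : Fin (d + 1) => (n : ℂ))).re ≤ M * u :=
    (Complex.re_le_norm _).trans hmk
  have h3 : M⁻¹ * (f (fun n : Fin (d + 1) => (n : ℂ))).re ≤ M⁻¹ * (M * u) := by gcongr
  rw [inv_mul_cancel_left₀ hM0.ne'] at h3
  linarith

instance isProbabilityMeasure_gaussMeasure (k : ℕ) : IsProbabilityMeasure (gaussMeasure k) := by
  unfold gaussMeasure
  infer_instance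

lemma integrable_eval_gaussMeasure {k : ℕ} (Q : MvPolynomial (Fin k) ℝ) :
    Integrable (fun x => MvPolynomial.eval x Q) (gaussMeasure k) := by
  simp_rw [MvPolynomial.eval_eq']
  refine integrable_finsetSum _ fun m _ => Integrable.const_mul ?_ _
  refine Integrable.fintype_prod (f := fun i t => t ^ m i) fun i => ?_
  exact (memLp_id_gaussianReal' (μ := 0) (v := 1) (m i : ENNReal) (by simp)).integrable_norm_pow'
    |>.mono (by fun_prop) (by simp)

/-- A measurable function dominated by a polynomial is Gaussian integrable. -/
lemma integrable_gaussMeasure_of_le_eval {k : ℕ} {F : (Fin k → ℝ) → ℝ}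
    (hF : AEStronglyMeasurable F (gaussMeasure k)) (Q : MvPolynomial (Fin k) ℝ)
    (h : ∀ x, |F x| ≤ MvPolynomial.eval x Q) : Integrable F (gaussMeasure k) :=
  (integrable_eval_gaussMeasure Q).mono' hF (Filter.Eventually.of_forall h)

lemma hasDerivAt_gaussianPDFReal (x : ℝ) :
    HasDerivAt (gaussianPDFReal 0 1) (-x * gaussianPDFReal 0 1 x) x := by
  rw [gaussianPDFReal_def]
  have h : HasDerivAt (fun y : ℝ => -(y - 0) ^ 2 / (2 * ((1 : NNReal) : ℝ))) (-x) x := by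
    refine ((((hasDerivAt_id x).sub_const 0).pow 2).neg.div_const
      (2 * ((1 : NNReal) : ℝ))).congr_deriv ?_
    simp only [id_eq, sub_zero, Nat.cast_ofNat, NNReal.coe_one]
    ring
  refine (h.exp.const_mul (√(2 * π * ((1 : NNReal) : ℝ)))⁻¹).congr_deriv ?_
  ring

/-- Gaussian integration by parts on the line. -/
lemma integral_gaussianReal_deriv_sub {f f' : ℝ → ℝ} (hd : ∀ x, HasDerivAt f (f' x) x)
    (hf : Integrable f (gaussianReal 0 1))
    (hf' : Integrable (fun x => f' x - x * f x) (gaussianReal 0 1)) :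
    ∫ x, (f' x - x * f x) ∂(gaussianReal 0 1) = 0 := by
  rw [integral_gaussianReal_eq_integral_smul one_ne_zero]
  have key : ∀ g : ℝ → ℝ, Integrable g (gaussianReal 0 1) →
      Integrable fun x => gaussianPDFReal 0 1 x • g x := by
    intro g hg
    rw [gaussianReal_of_var_ne_zero _ one_ne_zero] at hg
    rw [integrable_withDensity_iff_integrable_smul' (measurable_gaussianPDF 0 1)
      (Filter.Eventually.of_forall fun _ => gaussianPDF_lt_top)] at hg
    simpa [toReal_gaussianPDF] using hg
  refine integral_eq_zero_of_hasDerivAt_of_integrable (f := fun x => gaussianPDFReal 0 1 x • f x)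
    (fun x => ?_) (key _ hf') (key _ hf)
  refine ((hasDerivAt_gaussianPDFReal x).mul (hd x)).congr_deriv ?_
  rw [smul_eq_mul]
  ring

/-- The divergence theorem for the Gaussian measure, in a coordinate direction. -/
lemma integral_gaussMeasure_deriv_sub {k : ℕ} (j : Fin k) {F F' : (Fin k → ℝ) → ℝ}
    (hd : ∀ x, HasDerivAt (fun t => F (Function.update x j t)) (F' x) (x j))
    (hF : Integrable F (gaussMeasure k))
    (hF' : Integrable (fun x => F' x - x j * F x) (gaussMeasure k)) :
    ∫ x, (F' x - x j * F x) ∂(gaussMeasure k) = 0 := by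
  obtain _ | n := k
  · exact j.elim0
  have mp := (measurePreserving_piFinSuccAbove (fun _ : Fin (n + 1) => gaussianReal 0 1) j).symm
  have me := (MeasurableEquiv.piFinSuccAbove (fun _ : Fin (n + 1) => ℝ) j).symm.measurableEmbedding
  unfold gaussMeasure at hF hF' ⊢
  rw [← mp.integrable_comp_emb me] at hF hF'
  rw [← mp.integral_comp me]
  refine (integral_prod_symm _ hF').trans ?_
  have h1 := hF.prod_left_ae
  have h2 := hF'.prod_left_ae
  rw [integral_eq_zero_of_ae]
  filter_upwards [h1, h2] with y hy1 hy2
  simp only [Function.comp_def, MeasurableEquiv.piFinSuccAbove_symm_apply, Fin.insertNthEquiv_apply,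
    Fin.insertNth_apply_same, Pi.zero_apply] at hy1 hy2 ⊢
  refine integral_gaussianReal_deriv_sub (f := fun t => F (j.insertNth t y))
    (f' := fun t => F' (j.insertNth t y)) (fun t => ?_) hy1 hy2
  simpa using hd (j.insertNth t y)

lemma hasDerivAt_eval_update {k : ℕ} (Q : MvPolynomial (Fin k) ℝ) (j : Fin k) (x : Fin k → ℝ) :
    HasDerivAt (fun t => MvPolynomial.eval (Function.update x j t) Q)
      (MvPolynomial.eval x (MvPolynomial.pderiv j Q)) (x j) := by
  classical
  induction Q using MvPolynomial.induction_on with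
  | C a => simpa using hasDerivAt_const (x j) a
  | add p q hp hq => simpa using hp.fun_add hq
  | mul_X p i hp =>
    have hX : HasDerivAt (fun t => Function.update x j t i) (if i = j then 1 else 0) (x j) := by
      by_cases h : i = j
      · subst h
        simpa using hasDerivAt_id' (x i)
      · simpa [h] using hasDerivAt_const (x j) (x i)
    simp only [map_mul, MvPolynomial.eval_X, Derivation.leibniz, MvPolynomial.pderiv_X, map_add,
      smul_eq_mul]
    refine (hp.fun_mul hX).congr_deriv ?_
    by_cases h : i = j <;> simp [h] <;> ring

/-- The Ornstein–Uhlenbeck operator as a linear operator on polynomials. -/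
noncomputable def ouOperator (k : ℕ) :
    MvPolynomial (Fin k) ℝ →ₗ[ℝ] MvPolynomial (Fin k) ℝ where
  toFun P := ∑ j, (MvPolynomial.pderiv j (MvPolynomial.pderiv j P)
    - MvPolynomial.X j * MvPolynomial.pderiv j P)
  map_add' P Q := by
    rw [← Finset.sum_add_distrib]
    refine Finset.sum_congr rfl fun j _ => ?_
    simp only [map_add]
    ring
  map_smul' a P := by
    rw [Finset.smul_sum]
    refine Finset.sum_congr rfl fun j _ => ?_
    simp only [Derivation.map_smul, RingHom.id_apply, smul_sub, mul_smul_comm]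

lemma ouOperator_apply {k : ℕ} (P : MvPolynomial (Fin k) ℝ) :
    ouOperator k P = ∑ j, (MvPolynomial.pderiv j (MvPolynomial.pderiv j P)
      - MvPolynomial.X j * MvPolynomial.pderiv j P) := rfl

lemma coeff_X_mul_pderiv {k : ℕ} (P : MvPolynomial (Fin k) ℝ) (j : Fin k) (m : Fin k →₀ ℕ) :
    (MvPolynomial.X j * MvPolynomial.pderiv j P).coeff m = m j * P.coeff m := by
  classical
  rw [MvPolynomial.coeff_X_mul']
  split_ifs with h
  · have hj : 1 ≤ m j := Nat.one_le_iff_ne_zero.2 (Finsupp.mem_support_iff.1 h)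
    have e : m - Finsupp.single j 1 + Finsupp.single j 1 = m :=
      tsub_add_cancel_of_le (Finsupp.single_le_iff.2 hj)
    rw [MvPolynomial.coeff_pderiv, e]
    have e2 : ((m - Finsupp.single j 1 : Fin k →₀ ℕ) j : ℝ) + 1 = m j := by
      rw [Finsupp.tsub_apply, Finsupp.single_eq_same]
      push_cast [hj]; ring
    rw [e2]; ring
  · rw [Finsupp.notMem_support_iff.1 h]; simp

lemma totalDegree_ouOperator_add_le {k d : ℕ} {P : MvPolynomial (Fin k) ℝ}
    (hP : P.totalDegree ≤ d) : (ouOperator k P + (d : ℝ) • P).totalDegree ≤ d - 1 := by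
  have hz : ∀ m : Fin k →₀ ℕ, d < m.degree → P.coeff m = 0 := by
    intro m hm
    refine MvPolynomial.coeff_eq_zero_of_totalDegree_lt (lt_of_le_of_lt hP ?_)
    rwa [Finsupp.degree_apply] at hm
  have hc : ∀ m : Fin k →₀ ℕ, d ≤ m.degree → (ouOperator k P + (d : ℝ) • P).coeff m = 0 := by
    intro m hm
    rw [ouOperator_apply, MvPolynomial.coeff_add, MvPolynomial.coeff_sum, MvPolynomial.coeff_smul]
    have h2 : ∀ j, (MvPolynomial.pderiv j (MvPolynomial.pderiv j P)
        - MvPolynomial.X j * MvPolynomial.pderiv j P).coeff m = -((m j : ℝ) * P.coeff m) := by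
      intro j
      rw [MvPolynomial.coeff_sub, coeff_X_mul_pderiv, MvPolynomial.coeff_pderiv,
        MvPolynomial.coeff_pderiv, hz]
      · simp
      · simp only [map_add, Finsupp.degree_single]; omega
    simp only [h2]
    rw [Finset.sum_neg_distrib, ← Finset.sum_mul]
    have h3 : ∑ j, (m j : ℝ) = m.degree := by
      rw [Finsupp.degree_eq_sum]; push_cast; rfl
    rw [h3, smul_eq_mul]
    rcases eq_or_lt_of_le hm with h | h
    · rw [← h]; ring
    · rw [hz m h]; ring
  refine Finset.sup_le fun m hm => ?_
  have h1 : ¬ d ≤ m.degree := fun h => MvPolynomial.mem_support_iff.1 hm (hc m h)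
  rw [Finsupp.degree_apply] at h1
  change ∑ i ∈ m.support, m i ≤ d - 1
  omega

/-- Every polynomial of degree at most `d` is a sum of eigenvectors of the Ornstein–Uhlenbeck
operator with eigenvalues `0, -1, …, -d`. -/
theorem exists_ou_eigen_decomposition {k : ℕ} (d : ℕ) :
    ∀ P : MvPolynomial (Fin k) ℝ, P.totalDegree ≤ d →
      ∃ Q : ℕ → MvPolynomial (Fin k) ℝ, P = ∑ n ∈ Finset.range (d + 1), Q n ∧
        ∀ n ≤ d, ouOperator k (Q n) = -((n : ℝ) • Q n) := by
  induction d with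
  | zero =>
    intro P hP
    refine ⟨fun _ => P, by simp, fun n hn => ?_⟩
    obtain rfl : n = 0 := by omega
    rw [MvPolynomial.totalDegree_eq_zero_iff_eq_C.1 (by omega : P.totalDegree = 0), ouOperator_apply]
    simp
  | succ d ih =>
    intro P hP
    obtain ⟨R, hR, hRe⟩ := ih _ (totalDegree_ouOperator_add_le hP)
    set S : ℕ → MvPolynomial (Fin k) ℝ := fun n => ((d + 1 : ℝ) - n)⁻¹ • R n with hS
    have hSe : ∀ n ≤ d, ouOperator k (S n) = -((n : ℝ) • S n) := by
      intro n hn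
      rw [hS, map_smul, hRe n hn, smul_neg, smul_comm]
    refine ⟨fun n => if n = d + 1 then P - ∑ i ∈ Finset.range (d + 1), S i else S n, ?_, ?_⟩
    · rw [Finset.sum_range_succ, if_pos rfl]
      have : ∑ n ∈ Finset.range (d + 1),
          (if n = d + 1 then P - ∑ i ∈ Finset.range (d + 1), S i else S n) =
          ∑ n ∈ Finset.range (d + 1), S n := by
        refine Finset.sum_congr rfl fun n hn => if_neg ?_
        have := Finset.mem_range.1 hn
        omega
      rw [this]; abel
    · intro n hn
      rcases eq_or_lt_of_le hn with rfl | h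
      · simp only [if_true]
        have h1 : ouOperator k P = ∑ n ∈ Finset.range (d + 1), R n - ((d + 1 : ℕ) : ℝ) • P := by
          rw [← hR]; abel
        have h2 : ∀ n ∈ Finset.range (d + 1), ouOperator k (S n) =
            R n - ((d + 1 : ℕ) : ℝ) • S n := by
          intro n hn
          have hn' : n ≤ d := by have := Finset.mem_range.1 hn; omega
          rw [hSe n hn']
          have h0 : (d + 1 : ℝ) - n ≠ 0 := by
            have : (n : ℝ) ≤ d := by exact_mod_cast hn'
            linarith
          have h3 : R n = ((d + 1 : ℝ) - n) • S n := by
            rw [hS, smul_inv_smul₀ h0]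
          rw [h3, sub_smul]
          push_cast
          abel
        rw [map_sub, map_sum, Finset.sum_congr rfl h2, h1, Finset.sum_sub_distrib,
          ← Finset.smul_sum, smul_sub]
        abel
      · simp only [if_neg h.ne]
        exact hSe n (by omega)

/-- Conditions on a function `b` of the squared modulus under which the complex Mehler
semigroup with parameter in `lens κ` decreases the integral of `b`. -/
structure IsRadialProfile (κ : ℝ) (b b₁ b₂ : ℝ → ℝ) : Prop where
  hasDerivAt : ∀ q, 0 ≤ q → HasDerivAt b (b₁ q) q
  hasDerivAt_deriv : ∀ q, 0 ≤ q → HasDerivAt b₁ (b₂ q) q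
  continuousOn : ContinuousOn b₂ (Set.Ici 0)
  bound : ∃ C : ℝ, ∃ N : ℕ, ∀ q, 0 ≤ q →
    |b q| ≤ C * (1 + q) ^ N ∧ |b₁ q| ≤ C * (1 + q) ^ N ∧ |b₂ q| ≤ C * (1 + q) ^ N
  nonneg : ∀ q, 0 ≤ q → 0 ≤ b₁ q
  radial_nonneg : ∀ q, 0 ≤ q → 0 ≤ b₁ q + 2 * q * b₂ q
  discrim_le : ∀ q, 0 ≤ q → (q * b₂ q) ^ 2 ≤ κ ^ 2 * (b₁ q + 2 * q * b₂ q) * b₁ q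

lemma quadratic_form_nonneg {A D C ξ η κ X Y : ℝ} (hκ : 0 ≤ κ) (hA : 0 ≤ A) (hC : 0 ≤ C)
    (hD : D ^ 2 ≤ κ ^ 2 * A * C) (hη : κ * |η| ≤ ξ) :
    0 ≤ A * ξ * X ^ 2 + 2 * D * η * X * Y + C * ξ * Y ^ 2 := by
  have hξ : 0 ≤ ξ := (mul_nonneg hκ (abs_nonneg η)).trans hη
  have h1 : (D * η) ^ 2 ≤ (A * ξ) * (C * ξ) := by
    have h2 : (κ * |η|) ^ 2 ≤ ξ ^ 2 := by gcongr
    rw [mul_pow, sq_abs] at h2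
    nlinarith [mul_le_mul_of_nonneg_right hD (sq_nonneg η),
      mul_le_mul_of_nonneg_left h2 (mul_nonneg hA hC)]
  have h3 : |D * η| ≤ √(A * ξ) * √(C * ξ) := by
    rw [← Real.sqrt_mul (mul_nonneg hA hξ)]
    exact Real.abs_le_sqrt h1
  have h4 : |D * η * (X * Y)| ≤ (√(A * ξ) * √(C * ξ)) * (|X| * |Y|) := by
    rw [abs_mul, abs_mul X]
    gcongr
  have h5 := neg_abs_le (D * η * (X * Y))
  have h6 := sq_nonneg (√(A * ξ) * |X| - √(C * ξ) * |Y|)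
  have e1 := Real.sq_sqrt (mul_nonneg hA hξ)
  have e2 := Real.sq_sqrt (mul_nonneg hC hξ)
  have e3 := sq_abs X
  have e4 := sq_abs Y
  have h7 : (√(A * ξ) * |X| - √(C * ξ) * |Y|) ^ 2 = A * ξ * X ^ 2 + C * ξ * Y ^ 2
      - 2 * ((√(A * ξ) * √(C * ξ)) * (|X| * |Y|)) := by
    rw [← e3, ← e4]
    linear_combination |X| ^ 2 * e1 + |Y| ^ 2 * e2
  nlinarith

lemma IsRadialProfile.gradient_form_nonneg {κ : ℝ} {b b₁ b₂ : ℝ → ℝ}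
    (hb : IsRadialProfile κ b b₁ b₂) (hκ : 0 ≤ κ) {ξ η : ℝ} (hη : κ * |η| ≤ ξ) (f g u v : ℝ) :
    0 ≤ 4 * b₂ (f ^ 2 + g ^ 2) * (f * u + g * v) * (ξ * (f * u + g * v) + η * (g * u - f * v))
      + 2 * b₁ (f ^ 2 + g ^ 2) * ξ * (u ^ 2 + v ^ 2) := by
  have hξ : 0 ≤ ξ := (mul_nonneg hκ (abs_nonneg η)).trans hη
  set q := f ^ 2 + g ^ 2 with hq
  have hq0 : 0 ≤ q := by positivity
  rcases hq0.eq_or_lt with h | h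
  · have hf : f = 0 := by nlinarith [sq_nonneg f, sq_nonneg g]
    have hg : g = 0 := by nlinarith [sq_nonneg f, sq_nonneg g]
    have := hb.nonneg q hq0
    rw [hf, hg]
    simp only [zero_mul, add_zero, mul_zero, zero_add]
    positivity
  · have key := quadratic_form_nonneg (X := f * u + g * v) (Y := g * u - f * v) hκ
      (hb.radial_nonneg q hq0) (hb.nonneg q hq0) (hb.discrim_le q hq0) hη
    refine nonneg_of_mul_nonneg_right (?_ : 0 ≤ q * _) h
    have e : q * (u ^ 2 + v ^ 2) = (f * u + g * v) ^ 2 + (g * u - f * v) ^ 2 := by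
      rw [hq]
      ring
    have e2 : q * (4 * b₂ q * (f * u + g * v) * (ξ * (f * u + g * v) + η * (g * u - f * v))
        + 2 * b₁ q * ξ * (u ^ 2 + v ^ 2)) = 2 * ((b₁ q + 2 * q * b₂ q) * ξ * (f * u + g * v) ^ 2
        + 2 * (q * b₂ q) * η * (f * u + g * v) * (g * u - f * v)
        + b₁ q * ξ * (g * u - f * v) ^ 2) := by
      linear_combination 2 * b₁ q * ξ * e
    rw [e2]
    linarith

lemma abs_eval_le_eval_one_add_sq {k : ℕ} (Q : MvPolynomial (Fin k) ℝ) (x : Fin k → ℝ) :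
    |MvPolynomial.eval x Q| ≤ MvPolynomial.eval x (1 + Q ^ 2) := by
  simp only [map_add, map_one, map_pow]
  nlinarith [sq_abs (MvPolynomial.eval x Q), sq_nonneg (|MvPolynomial.eval x Q| - 1),
    abs_nonneg (MvPolynomial.eval x Q)]

lemma continuous_comp_eval {k : ℕ} {φ : ℝ → ℝ} (hφ : ContinuousOn φ (Set.Ici 0))
    {G : MvPolynomial (Fin k) ℝ} (hG : ∀ x, 0 ≤ MvPolynomial.eval x G) :
    Continuous fun x => φ (MvPolynomial.eval x G) :=
  hφ.comp_continuous (MvPolynomial.continuous_eval G) hG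

lemma integrable_comp_eval_mul_eval {k : ℕ} {φ : ℝ → ℝ} (hφ : ContinuousOn φ (Set.Ici 0))
    {C : ℝ} {N : ℕ} (hb : ∀ q, 0 ≤ q → |φ q| ≤ C * (1 + q) ^ N)
    {G : MvPolynomial (Fin k) ℝ} (hG : ∀ x, 0 ≤ MvPolynomial.eval x G)
    (H : MvPolynomial (Fin k) ℝ) :
    Integrable (fun x => φ (MvPolynomial.eval x G) * MvPolynomial.eval x H) (gaussMeasure k) := by
  refine integrable_gaussMeasure_of_le_eval
    ((continuous_comp_eval hφ hG).mul (MvPolynomial.continuous_eval H)).aestronglyMeasurable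
    (MvPolynomial.C C * (1 + G) ^ N * (1 + H ^ 2)) fun x => ?_
  rw [abs_mul, map_mul]
  refine mul_le_mul ?_ (abs_eval_le_eval_one_add_sq H x) (abs_nonneg _) ?_
  · simpa using hb _ (hG x)
  · simpa using (abs_nonneg _).trans (hb _ (hG x))

/-- Sign of the entropy-type dissipation of the Ornstein–Uhlenbeck operator rotated by a
complex number `ξ + i η` in the sector `κ |η| ≤ ξ`. -/
lemma IsRadialProfile.integral_ou_nonpos {κ : ℝ} {b b₁ b₂ : ℝ → ℝ}
    (hb : IsRadialProfile κ b b₁ b₂) (hκ : 0 ≤ κ) {ξ η : ℝ} (hη : κ * |η| ≤ ξ) {k : ℕ}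
    (f g : MvPolynomial (Fin k) ℝ) :
    ∫ x, b₁ (MvPolynomial.eval x (f ^ 2 + g ^ 2)) * MvPolynomial.eval x
      (2 * ((MvPolynomial.C ξ * f + MvPolynomial.C η * g) * ouOperator k f
        + (MvPolynomial.C ξ * g - MvPolynomial.C η * f) * ouOperator k g)) ∂(gaussMeasure k)
      ≤ 0 := by
  obtain ⟨C, N, hCN⟩ := hb.bound
  have hG : ∀ x, 0 ≤ MvPolynomial.eval x (f ^ 2 + g ^ 2) := fun x => by
    simp only [map_add, map_pow]
    positivity
  have hc1 : ContinuousOn b₁ (Set.Ici 0) :=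
    fun q hq => (hb.hasDerivAt_deriv q hq).continuousAt.continuousWithinAt
  have int1 := fun H => integrable_comp_eval_mul_eval hc1 (fun q hq => (hCN q hq).2.1) hG H
  have int2 := fun H =>
    integrable_comp_eval_mul_eval hb.continuousOn (fun q hq => (hCN q hq).2.2) hG H
  let H : Fin k → MvPolynomial (Fin k) ℝ := fun j =>
    2 * ((MvPolynomial.C ξ * f + MvPolynomial.C η * g) * MvPolynomial.pderiv j f
        + (MvPolynomial.C ξ * g - MvPolynomial.C η * f) * MvPolynomial.pderiv j g)
  let F : Fin k → (Fin k → ℝ) → ℝ := fun j x =>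
    b₁ (MvPolynomial.eval x (f ^ 2 + g ^ 2)) * MvPolynomial.eval x (H j)
  let F' : Fin k → (Fin k → ℝ) → ℝ := fun j x =>
    b₂ (MvPolynomial.eval x (f ^ 2 + g ^ 2))
      * MvPolynomial.eval x (MvPolynomial.pderiv j (f ^ 2 + g ^ 2) * H j)
    + b₁ (MvPolynomial.eval x (f ^ 2 + g ^ 2)) * MvPolynomial.eval x (MvPolynomial.pderiv j (H j))
  have hF : ∀ j, Integrable (F j) (gaussMeasure k) := fun j => int1 (H j)
  have hF' : ∀ j, Integrable (fun x => F' j x - x j * F j x) (gaussMeasure k) := fun j => by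
    refine ((int2 _).add (int1 _)).sub ((int1 (MvPolynomial.X j * H j)).congr ?_)
    refine Filter.Eventually.of_forall fun x => ?_
    simp only [F, map_mul, MvPolynomial.eval_X]
    ring
  have hzero : ∀ j, ∫ x, (F' j x - x j * F j x) ∂(gaussMeasure k) = 0 := fun j => by
    refine integral_gaussMeasure_deriv_sub j (fun x => ?_) (hF j) (hF' j)
    have hq : HasDerivAt b₁ (b₂ (MvPolynomial.eval x (f ^ 2 + g ^ 2)))
        (MvPolynomial.eval (Function.update x j (x j)) (f ^ 2 + g ^ 2)) := by
      rw [Function.update_eq_self]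
      exact hb.hasDerivAt_deriv _ (hG x)
    refine ((hq.comp (x j) (hasDerivAt_eval_update (f ^ 2 + g ^ 2) j x)).mul
      (hasDerivAt_eval_update (H j) j x)).congr_deriv ?_
    simp only [F', map_mul, Function.update_eq_self, Function.comp_apply]
    ring
  calc _ ≤ ∫ x, ∑ j, (F' j x - x j * F j x) ∂(gaussMeasure k) := by
        refine integral_mono (int1 _) (integrable_finsetSum _ fun j _ => hF' j) fun x => ?_
        have e : b₁ (MvPolynomial.eval x (f ^ 2 + g ^ 2)) * MvPolynomial.eval x
            (2 * ((MvPolynomial.C ξ * f + MvPolynomial.C η * g) * ouOperator k f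
            + (MvPolynomial.C ξ * g - MvPolynomial.C η * f) * ouOperator k g)) =
            ∑ j, b₁ (MvPolynomial.eval x (f ^ 2 + g ^ 2)) * MvPolynomial.eval x
            (2 * ((MvPolynomial.C ξ * f + MvPolynomial.C η * g) *
              (MvPolynomial.pderiv j (MvPolynomial.pderiv j f)
                - MvPolynomial.X j * MvPolynomial.pderiv j f)
            + (MvPolynomial.C ξ * g - MvPolynomial.C η * f) *
              (MvPolynomial.pderiv j (MvPolynomial.pderiv j g)
                - MvPolynomial.X j * MvPolynomial.pderiv j g))) := by
          rw [← Finset.mul_sum, ← map_sum, ← Finset.mul_sum, Finset.sum_add_distrib,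
            ← Finset.mul_sum, ← Finset.mul_sum, ouOperator_apply, ouOperator_apply]
        simp only [e]
        refine Finset.sum_le_sum fun j _ => ?_
        have key := hb.gradient_form_nonneg hκ hη (MvPolynomial.eval x f) (MvPolynomial.eval x g)
          (MvPolynomial.eval x (MvPolynomial.pderiv j f))
          (MvPolynomial.eval x (MvPolynomial.pderiv j g))
        have h2 : MvPolynomial.pderiv j (2 : MvPolynomial (Fin k) ℝ) = 0 := by
          simpa using (MvPolynomial.pderiv (R := ℝ) j).map_natCast 2
        rw [← sub_nonneg]
        refine key.trans_eq ?_
        simp only [F', F, H, map_add, map_sub, map_mul, map_pow, Derivation.leibniz,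
          Derivation.leibniz_pow, MvPolynomial.pderiv_C, MvPolynomial.eval_C, MvPolynomial.eval_X,
          smul_eq_mul, map_ofNat, h2, map_zero, mul_zero, add_zero, nsmul_eq_mul,
          map_natCast]
        push_cast
        ring
    _ = 0 := by
        rw [integral_finsetSum _ fun j _ => hF' j]
        exact Finset.sum_eq_zero fun j _ => hzero j

/-- The linear combination `∑ₙ aₙ Qₙ` of the first `d + 1` polynomials of a sequence. -/
noncomputable def lincomb {k : ℕ} (d : ℕ) (Q : ℕ → MvPolynomial (Fin k) ℝ) (a : ℕ → ℝ) :
    MvPolynomial (Fin k) ℝ :=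
  ∑ n ∈ Finset.range (d + 1), MvPolynomial.C (a n) * Q n

lemma eval_lincomb {k : ℕ} (d : ℕ) (Q : ℕ → MvPolynomial (Fin k) ℝ) (a : ℕ → ℝ)
    (x : Fin k → ℝ) :
    MvPolynomial.eval x (lincomb d Q a)
      = ∑ n ∈ Finset.range (d + 1), a n * MvPolynomial.eval x (Q n) := by
  simp [lincomb]

lemma abs_eval_lincomb_le {k : ℕ} (d : ℕ) (Q : ℕ → MvPolynomial (Fin k) ℝ) {a A : ℕ → ℝ}
    (h : ∀ n, |a n| ≤ A n) (x : Fin k → ℝ) :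
    |MvPolynomial.eval x (lincomb d Q a)|
      ≤ MvPolynomial.eval x (lincomb d (fun n => 1 + Q n ^ 2) A) := by
  rw [eval_lincomb, eval_lincomb]
  refine (Finset.abs_sum_le_sum_abs _ _).trans (Finset.sum_le_sum fun n _ => ?_)
  rw [abs_mul]
  exact mul_le_mul (h n) (abs_eval_le_eval_one_add_sq _ _) (abs_nonneg _)
    ((abs_nonneg _).trans (h n))

lemma ouOperator_lincomb {k d : ℕ} {Q : ℕ → MvPolynomial (Fin k) ℝ}
    (hQ : ∀ n ≤ d, ouOperator k (Q n) = -((n : ℝ) • Q n)) (a : ℕ → ℝ) :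
    ouOperator k (lincomb d Q a) = lincomb d Q (fun n => -(n * a n)) := by
  rw [lincomb, map_sum]
  refine Finset.sum_congr rfl fun n hn => ?_
  rw [← MvPolynomial.smul_eq_C_mul, map_smul, hQ n (by grind), ← MvPolynomial.smul_eq_C_mul]
  module

lemma hasDerivAt_eval_lincomb {k d : ℕ} {Q : ℕ → MvPolynomial (Fin k) ℝ} {a : ℝ → ℕ → ℝ}
    {a' : ℕ → ℝ} {s : ℝ} (h : ∀ n, HasDerivAt (fun t => a t n) (a' n) s) (x : Fin k → ℝ) :
    HasDerivAt (fun t => MvPolynomial.eval x (lincomb d Q (a t)))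
      (MvPolynomial.eval x (lincomb d Q a')) s := by
  simp only [eval_lincomb]
  exact HasDerivAt.fun_sum fun n _ => (h n).mul_const _

section Mehler

variable (v : ℂ) (s : ℝ) (n : ℕ)

lemma hasDerivAt_segment_pow :
    HasDerivAt (fun t : ℝ => (1 - t * v) ^ n) (-(n * (1 - s * v) ^ (n - 1) * v)) s := by
  have h : HasDerivAt (fun t : ℝ => 1 - (t : ℂ) * v) (-v) s := by
    simpa using ((Complex.ofRealCLM.hasDerivAt (x := s)).mul_const v).const_sub 1
  refine (h.pow n).congr_deriv ?_
  ring

lemma hasDerivAt_segment_pow_re :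
    HasDerivAt (fun t : ℝ => ((1 - t * v) ^ n).re) (-(n * (1 - s * v) ^ (n - 1) * v)).re s :=
  Complex.reCLM.hasFDerivAt.comp_hasDerivAt s (hasDerivAt_segment_pow v s n)

lemma hasDerivAt_segment_pow_im :
    HasDerivAt (fun t : ℝ => ((1 - t * v) ^ n).im) (-(n * (1 - s * v) ^ (n - 1) * v)).im s :=
  Complex.imCLM.hasFDerivAt.comp_hasDerivAt s (hasDerivAt_segment_pow v s n)

variable {s}

lemma norm_segment_le (hs : s ∈ Set.Ioo (-1 : ℝ) 2) : ‖1 - s * v‖ ≤ 1 + 2 * ‖v‖ := by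
  refine (norm_sub_le _ _).trans ?_
  rw [norm_mul, norm_one, Complex.norm_real, Real.norm_eq_abs]
  have : |s| ≤ 2 := abs_le.2 ⟨by linarith [hs.1], hs.2.le⟩
  gcongr

lemma norm_segment_pow_le (hs : s ∈ Set.Ioo (-1 : ℝ) 2) :
    ‖(1 - s * v) ^ n‖ ≤ (1 + 2 * ‖v‖) ^ n + n * (1 + 2 * ‖v‖) ^ (n - 1) * ‖v‖ := by
  rw [norm_pow]
  have := pow_le_pow_left₀ (norm_nonneg _) (norm_segment_le v hs) n
  have h2 : 0 ≤ n * (1 + 2 * ‖v‖) ^ (n - 1) * ‖v‖ := by positivity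
  linarith

lemma norm_deriv_segment_pow_le (hs : s ∈ Set.Ioo (-1 : ℝ) 2) :
    ‖-(n * (1 - s * v) ^ (n - 1) * v)‖
      ≤ (1 + 2 * ‖v‖) ^ n + n * (1 + 2 * ‖v‖) ^ (n - 1) * ‖v‖ := by
  rw [norm_neg, norm_mul, norm_mul, norm_pow, Complex.norm_natCast]
  have := pow_le_pow_left₀ (norm_nonneg _) (norm_segment_le v hs) (n - 1)
  have h2 : 0 ≤ (1 + 2 * ‖v‖) ^ n := by positivity
  have : n * ‖1 - s * v‖ ^ (n - 1) * ‖v‖ ≤ n * (1 + 2 * ‖v‖) ^ (n - 1) * ‖v‖ := by gcongr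
  linarith

end Mehler

lemma IsRadialProfile.hasDerivAt_integral_segment {κ : ℝ} {b b₁ b₂ : ℝ → ℝ}
    (hb : IsRadialProfile κ b b₁ b₂) {k : ℕ} (d : ℕ) (Q : ℕ → MvPolynomial (Fin k) ℝ) (v : ℂ)
    {s : ℝ} (hs : s ∈ Set.Ioo (-1 : ℝ) 2) :
    HasDerivAt (fun t : ℝ => ∫ x, b (MvPolynomial.eval x
        (lincomb d Q (fun n => ((1 - t * v) ^ n).re) ^ 2
          + lincomb d Q (fun n => ((1 - t * v) ^ n).im) ^ 2)) ∂(gaussMeasure k))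
      (∫ x, b₁ (MvPolynomial.eval x
        (lincomb d Q (fun n => ((1 - s * v) ^ n).re) ^ 2
          + lincomb d Q (fun n => ((1 - s * v) ^ n).im) ^ 2)) * MvPolynomial.eval x
        (2 * (lincomb d Q (fun n => ((1 - s * v) ^ n).re)
            * lincomb d Q (fun n => (-(n * (1 - s * v) ^ (n - 1) * v)).re)
          + lincomb d Q (fun n => ((1 - s * v) ^ n).im)
            * lincomb d Q (fun n => (-(n * (1 - s * v) ^ (n - 1) * v)).im))) ∂(gaussMeasure k)) s := by
  obtain ⟨C, N, hCN⟩ := hb.bound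
  have hC : 0 ≤ C := by simpa using (abs_nonneg _).trans (hCN 0 le_rfl).1
  have hG : ∀ f g : MvPolynomial (Fin k) ℝ, ∀ x, 0 ≤ MvPolynomial.eval x (f ^ 2 + g ^ 2) := by
    intro f g x
    simp only [map_add, map_pow]
    positivity
  have hc0 : ContinuousOn b (Set.Ici 0) :=
    fun q hq => (hb.hasDerivAt q hq).continuousAt.continuousWithinAt
  have hc1 : ContinuousOn b₁ (Set.Ici 0) :=
    fun q hq => (hb.hasDerivAt_deriv q hq).continuousAt.continuousWithinAt
  let M := lincomb d (fun n => 1 + Q n ^ 2)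
    (fun n => (1 + 2 * ‖v‖) ^ n + n * (1 + 2 * ‖v‖) ^ (n - 1) * ‖v‖)
  refine (hasDerivAt_integral_of_dominated_loc_of_deriv_le (μ := gaussMeasure k)
    (F := fun (t : ℝ) x => b (MvPolynomial.eval x
        (lincomb d Q (fun n => ((1 - t * v) ^ n).re) ^ 2
          + lincomb d Q (fun n => ((1 - t * v) ^ n).im) ^ 2)))
    (F' := fun (t : ℝ) x => b₁ (MvPolynomial.eval x
        (lincomb d Q (fun n => ((1 - t * v) ^ n).re) ^ 2
          + lincomb d Q (fun n => ((1 - t * v) ^ n).im) ^ 2)) * MvPolynomial.eval x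
        (2 * (lincomb d Q (fun n => ((1 - t * v) ^ n).re)
            * lincomb d Q (fun n => (-(n * (1 - t * v) ^ (n - 1) * v)).re)
          + lincomb d Q (fun n => ((1 - t * v) ^ n).im)
            * lincomb d Q (fun n => (-(n * (1 - t * v) ^ (n - 1) * v)).im))))
    (bound := fun x => MvPolynomial.eval x
      (MvPolynomial.C C * (1 + (M ^ 2 + M ^ 2)) ^ N * (2 * (M * M + M * M))))
    (Ioo_mem_nhds hs.1 hs.2) ?_ ?_ ?_ ?_ ?_ ?_).2
  · exact Filter.Eventually.of_forall fun t =>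
      (continuous_comp_eval hc0 (hG _ _)).aestronglyMeasurable
  · simpa using integrable_comp_eval_mul_eval hc0 (fun q hq => (hCN q hq).1)
      (hG (lincomb d Q (fun n => ((1 - s * v) ^ n).re))
        (lincomb d Q (fun n => ((1 - s * v) ^ n).im))) 1
  · exact ((continuous_comp_eval hc1 (hG _ _)).mul
      (MvPolynomial.continuous_eval _)).aestronglyMeasurable
  · refine Filter.Eventually.of_forall fun x t ht => ?_
    have h1 := abs_eval_lincomb_le d Q (fun n => (Complex.abs_re_le_norm _).trans
      (norm_segment_pow_le v n ht)) x
    have h2 := abs_eval_lincomb_le d Q (fun n => (Complex.abs_im_le_norm _).trans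
      (norm_segment_pow_le v n ht)) x
    have h3 := abs_eval_lincomb_le d Q (fun n => (Complex.abs_re_le_norm _).trans
      (norm_deriv_segment_pow_le v n ht)) x
    have h4 := abs_eval_lincomb_le d Q (fun n => (Complex.abs_im_le_norm _).trans
      (norm_deriv_segment_pow_le v n ht)) x
    have hq := hG (lincomb d Q (fun n => ((1 - t * v) ^ n).re))
        (lincomb d Q (fun n => ((1 - t * v) ^ n).im)) x
    have h5 := (hCN _ hq).2.1
    have hM : 0 ≤ MvPolynomial.eval x M := (abs_nonneg _).trans h1
    change _ ≤ MvPolynomial.eval x M at h1 h2 h3 h4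
    rw [Real.norm_eq_abs, abs_mul]
    simp only [map_mul, map_add, map_pow, map_one, MvPolynomial.eval_C, map_ofNat] at h5 hq ⊢
    generalize MvPolynomial.eval x (lincomb d Q fun n => ((1 - t * v) ^ n).re) = f at *
    generalize MvPolynomial.eval x (lincomb d Q fun n => ((1 - t * v) ^ n).im) = g at *
    generalize MvPolynomial.eval x
      (lincomb d Q fun n => (-(n * (1 - t * v) ^ (n - 1) * v)).re) = f' at *
    generalize MvPolynomial.eval x
      (lincomb d Q fun n => (-(n * (1 - t * v) ^ (n - 1) * v)).im) = g' at *
    generalize MvPolynomial.eval x M = m at *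
    have hf2 : f ^ 2 ≤ m ^ 2 := sq_le_sq' (abs_le.1 h1).1 (abs_le.1 h1).2
    have hg2 : g ^ 2 ≤ m ^ 2 := sq_le_sq' (abs_le.1 h2).1 (abs_le.1 h2).2
    refine mul_le_mul (h5.trans ?_) ?_ (abs_nonneg _) (by positivity)
    · gcongr
    · rw [abs_mul, abs_two]
      have := (abs_add_le (f * f') (g * g'))
      rw [abs_mul, abs_mul] at this
      have h6 : |f| * |f'| ≤ m * m := mul_le_mul h1 h3 (abs_nonneg _) hM
      have h7 : |g| * |g'| ≤ m * m := mul_le_mul h2 h4 (abs_nonneg _) hM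
      linarith
  · exact integrable_eval_gaussMeasure _
  · refine Filter.Eventually.of_forall fun x t ht => ?_
    have hf := hasDerivAt_eval_lincomb (d := d) (Q := Q)
      (fun n => hasDerivAt_segment_pow_re v t n) x
    have hg := hasDerivAt_eval_lincomb (d := d) (Q := Q)
      (fun n => hasDerivAt_segment_pow_im v t n) x
    simp only [map_add, map_pow]
    refine ((hb.hasDerivAt (_ ^ 2 + _ ^ 2) (by positivity)).comp t
      ((hf.pow 2).add (hg.pow 2))).congr_deriv ?_
    simp only [map_mul, map_add, map_ofNat]
    ring

lemma segment_ne_zero {v : ℂ} (hv : Complex.normSq v ≤ v.re) {s : ℝ}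
    (hs : s ∈ Set.Ioo (0 : ℝ) 1) : 1 - s * v ≠ 0 := by
  intro h
  have hre := congrArg Complex.re h
  simp only [Complex.sub_re, Complex.one_re, Complex.re_ofReal_mul, Complex.zero_re] at hre
  rw [Complex.normSq_apply] at hv
  have h0 : v.re ≤ 1 := by nlinarith [mul_self_nonneg v.im, mul_self_nonneg (v.re - 1)]
  nlinarith [hs.1, hs.2]

lemma div_segment_mem_sector {κ : ℝ} {v : ℂ} (hv : κ * |v.im| ≤ v.re - Complex.normSq v) {s : ℝ}
    (hs : s ∈ Set.Ioo (0 : ℝ) 1) (hz : 1 - s * v ≠ 0) :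
    κ * |(v / (1 - s * v)).im| ≤ (v / (1 - s * v)).re := by
  have hn : 0 < Complex.normSq (1 - s * v) := Complex.normSq_pos.2 hz
  have hre : (v / (1 - s * v)).re
      = (v.re - s * (v.re * v.re + v.im * v.im)) / Complex.normSq (1 - s * v) := by
    simp only [Complex.div_re, Complex.sub_re, Complex.sub_im, Complex.one_re,
      Complex.one_im, Complex.mul_re, Complex.mul_im, Complex.ofReal_re, Complex.ofReal_im]
    ring
  have him : (v / (1 - s * v)).im = v.im / Complex.normSq (1 - s * v) := by
    simp only [Complex.div_im, Complex.sub_re, Complex.sub_im, Complex.one_re,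
      Complex.one_im, Complex.mul_re, Complex.mul_im, Complex.ofReal_re, Complex.ofReal_im]
    ring
  rw [hre, him, abs_div, abs_of_pos hn, ← mul_div_assoc]
  gcongr
  rw [Complex.normSq_apply] at hv
  nlinarith [hs.2, mul_self_nonneg v.re, mul_self_nonneg v.im]

/-- Differentiating the Mehler multipliers amounts to applying a rotated
Ornstein–Uhlenbeck operator. -/
lemma eval_mehler_deriv {k d : ℕ} {Q : ℕ → MvPolynomial (Fin k) ℝ}
    (hQ : ∀ n ≤ d, ouOperator k (Q n) = -((n : ℝ) • Q n)) {z v ζ : ℂ} (hζ : v = ζ * z)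
    (x : Fin k → ℝ) :
    MvPolynomial.eval x (2 * (lincomb d Q (fun n => (z ^ n).re)
            * lincomb d Q (fun n => (-(n * z ^ (n - 1) * v)).re)
          + lincomb d Q (fun n => (z ^ n).im)
            * lincomb d Q (fun n => (-(n * z ^ (n - 1) * v)).im)))
      = MvPolynomial.eval x
        (2 * ((MvPolynomial.C ζ.re * lincomb d Q (fun n => (z ^ n).re)
            + MvPolynomial.C ζ.im * lincomb d Q (fun n => (z ^ n).im))
            * ouOperator k (lincomb d Q (fun n => (z ^ n).re))
          + (MvPolynomial.C ζ.re * lincomb d Q (fun n => (z ^ n).im)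
            - MvPolynomial.C ζ.im * lincomb d Q (fun n => (z ^ n).re))
            * ouOperator k (lincomb d Q (fun n => (z ^ n).im)))) := by
  have hpow : ∀ n : ℕ, -((n : ℂ) * z ^ (n - 1) * v) = ζ * ((-(n : ℝ) : ℝ) * z ^ n) := by
    intro n
    cases n with
    | zero => simp
    | succ m =>
      simp only [hζ, Nat.add_sub_cancel, pow_succ]
      push_cast
      ring
  have e1 : MvPolynomial.eval x (lincomb d Q (fun n => (-((n : ℂ) * z ^ (n - 1) * v)).re))
      = ζ.re * MvPolynomial.eval x (lincomb d Q (fun n => -(n * (z ^ n).re)))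
      - ζ.im * MvPolynomial.eval x (lincomb d Q (fun n => -(n * (z ^ n).im))) := by
    simp only [eval_lincomb, hpow, Finset.mul_sum, ← Finset.sum_sub_distrib]
    refine Finset.sum_congr rfl fun n _ => ?_
    rw [Complex.mul_re, Complex.re_ofReal_mul, Complex.im_ofReal_mul]
    ring
  have e2 : MvPolynomial.eval x (lincomb d Q (fun n => (-((n : ℂ) * z ^ (n - 1) * v)).im))
      = ζ.im * MvPolynomial.eval x (lincomb d Q (fun n => -(n * (z ^ n).re)))
      + ζ.re * MvPolynomial.eval x (lincomb d Q (fun n => -(n * (z ^ n).im))) := by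
    simp only [eval_lincomb, hpow, Finset.mul_sum, ← Finset.sum_add_distrib]
    refine Finset.sum_congr rfl fun n _ => ?_
    rw [Complex.mul_im, Complex.re_ofReal_mul, Complex.im_ofReal_mul]
    ring
  simp only [map_mul, map_add, map_sub, map_ofNat, e1, e2, ouOperator_lincomb hQ,
    MvPolynomial.eval_C]
  ring

theorem IsRadialProfile.integral_le {κ : ℝ} {b b₁ b₂ : ℝ → ℝ} (hb : IsRadialProfile κ b b₁ b₂)
    (hκ : 0 ≤ κ) {k d : ℕ} {Q : ℕ → MvPolynomial (Fin k) ℝ}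
    (hQ : ∀ n ≤ d, ouOperator k (Q n) = -((n : ℝ) • Q n)) {w : ℂ} (hw : w ∈ lens κ) :
    ∫ x, b (‖∑ n ∈ Finset.range (d + 1), w ^ n * (MvPolynomial.eval x (Q n) : ℂ)‖ ^ 2)
        ∂(gaussMeasure k)
      ≤ ∫ x, b ((∑ n ∈ Finset.range (d + 1), MvPolynomial.eval x (Q n)) ^ 2)
        ∂(gaussMeasure k) := by
  obtain ⟨v, rfl⟩ : ∃ v : ℂ, w = 1 - v := ⟨1 - w, by ring⟩
  have hv : κ * |v.im| ≤ v.re - Complex.normSq v := by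
    have := hw
    simp only [lens, Set.mem_ofPred_eq, Complex.normSq_apply, Complex.sub_re, Complex.sub_im,
      Complex.one_re, Complex.one_im, zero_sub, abs_neg] at this ⊢
    linarith
  let Φ : ℝ → ℝ := fun t : ℝ => ∫ x, b (MvPolynomial.eval x
        (lincomb d Q (fun n => ((1 - t * v) ^ n).re) ^ 2
          + lincomb d Q (fun n => ((1 - t * v) ^ n).im) ^ 2)) ∂(gaussMeasure k)
  have hder := fun (s : ℝ) (hs : s ∈ Set.Ioo (-1 : ℝ) 2) =>
    hb.hasDerivAt_integral_segment d Q v hs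
  have hanti : AntitoneOn Φ (Set.Icc 0 1) := by
    refine antitoneOn_of_deriv_nonpos (convex_Icc 0 1)
      (fun s hs => (hder s ⟨by linarith [hs.1], by linarith [hs.2]⟩).continuousAt.continuousWithinAt)
      ?_ ?_
    · rw [interior_Icc]
      exact fun s hs =>
        (hder s ⟨by linarith [hs.1], by linarith [hs.2]⟩).differentiableAt.differentiableWithinAt
    · rw [interior_Icc]
      intro s hs
      rw [(hder s ⟨by linarith [hs.1], by linarith [hs.2]⟩).deriv]
      have hz := segment_ne_zero
        (sub_nonneg.1 ((mul_nonneg hκ (abs_nonneg v.im)).trans hv)) hs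
      simp only [eval_mehler_deriv hQ (div_mul_cancel₀ v hz).symm]
      exact hb.integral_ou_nonpos hκ (div_segment_mem_sector hv hs hz) _ _
  have h01 := hanti (Set.left_mem_Icc.2 zero_le_one) (Set.right_mem_Icc.2 zero_le_one) zero_le_one
  have hΦ : ∀ t : ℝ, Φ t = ∫ x, b (‖∑ n ∈ Finset.range (d + 1), (1 - t * v) ^ n *
      (MvPolynomial.eval x (Q n) : ℂ)‖ ^ 2) ∂(gaussMeasure k) := by
    intro t
    simp only [Φ]
    congr 1 with x
    congr 1
    rw [← Complex.normSq_eq_norm_sq, Complex.normSq_apply]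
    simp only [map_add, map_pow, eval_lincomb, Complex.re_sum, Complex.im_sum, Complex.re_mul_ofReal,
      Complex.im_mul_ofReal]
    ring
  rw [hΦ, hΦ] at h01
  simp only [Complex.ofReal_one, one_mul, Complex.ofReal_zero, zero_mul, sub_zero, one_pow,
    ← Complex.ofReal_sum, Complex.norm_real, Real.norm_eq_abs, sq_abs] at h01
  exact h01

/-- Convex increasing functions of polynomial growth whose logarithmic convexity ratio
`R B''(R) / B'(R)` is controlled by `κ`. -/
structure IsConvexProfile (κ : ℝ) (B : ℝ → ℝ) : Prop where
  continuousOn : ContinuousOn B (Set.Ici 0)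
  contDiffOn : ContDiffOn ℝ 2 B (Set.Ioi 0)
  deriv_pos : ∀ s, 0 < s → 0 < deriv B s
  deriv_deriv_pos : ∀ s, 0 < s → 0 < deriv (deriv B) s
  bound : ∀ ε, 0 < ε → ∃ C : ℝ, ∃ N : ℕ, 0 ≤ C ∧ ∀ s, ε ≤ s →
    |B s| ≤ C * (1 + s) ^ N ∧ deriv B s ≤ C * (1 + s) ^ N ∧ deriv (deriv B) s ≤ C * (1 + s) ^ N
  ratio : ∀ s, 0 < s → (s * deriv (deriv B) s - deriv B s) ^ 2
    ≤ 4 * κ ^ 2 * (s * deriv (deriv B) s) * deriv B s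

namespace IsConvexProfile

variable {κ : ℝ} {B : ℝ → ℝ}

lemma hasDerivAt (hB : IsConvexProfile κ B) {s : ℝ} (hs : 0 < s) : HasDerivAt B (deriv B s) s :=
  ((hB.contDiffOn.contDiffAt (Ioi_mem_nhds hs)).differentiableAt (by norm_num)).hasDerivAt

lemma contDiffOn_deriv (hB : IsConvexProfile κ B) : ContDiffOn ℝ 1 (deriv B) (Set.Ioi 0) :=
  hB.contDiffOn.deriv_of_isOpen isOpen_Ioi (by norm_num)

lemma hasDerivAt_deriv (hB : IsConvexProfile κ B) {s : ℝ} (hs : 0 < s) : HasDerivAt (deriv B) (deriv (deriv B) s) s :=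
  ((hB.contDiffOn_deriv.contDiffAt (Ioi_mem_nhds hs)).differentiableAt (by norm_num)).hasDerivAt

lemma continuousOn_deriv_deriv (hB : IsConvexProfile κ B) : ContinuousOn (deriv (deriv B)) (Set.Ioi 0) :=
  hB.contDiffOn_deriv.continuousOn_deriv_of_isOpen isOpen_Ioi le_rfl

lemma monotoneOn (hB : IsConvexProfile κ B) : MonotoneOn B (Set.Ici 0) := by
  refine monotoneOn_of_deriv_nonneg (convex_Ici 0) hB.continuousOn ?_ ?_ <;> rw [interior_Ici]
  · exact fun s hs => (hB.hasDerivAt hs).differentiableAt.differentiableWithinAt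
  · exact fun s hs => (hB.deriv_pos s hs).le

lemma convexOn (hB : IsConvexProfile κ B) : ConvexOn ℝ (Set.Ici 0) B := by
  refine convexOn_of_deriv2_nonneg (convex_Ici 0) hB.continuousOn ?_ ?_ ?_ <;> rw [interior_Ici]
  · exact fun s hs => (hB.hasDerivAt hs).differentiableAt.differentiableWithinAt
  · exact fun s hs => (hB.hasDerivAt_deriv hs).differentiableAt.differentiableWithinAt
  · exact fun s hs => (hB.deriv_deriv_pos s hs).le

lemma exists_bound (hB : IsConvexProfile κ B) : ∃ C : ℝ, ∃ N : ℕ, 0 ≤ C ∧ ∀ s, 0 ≤ s → |B s| ≤ C * (1 + s) ^ N := by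
  obtain ⟨C, N, hC, h⟩ := hB.bound 1 one_pos
  refine ⟨|B 0| + C * 2 ^ N, N, by positivity, fun s hs => ?_⟩
  have h1 : B 0 ≤ B s := hB.monotoneOn Set.self_mem_Ici hs hs
  have h2 : B s ≤ B (1 + s) := hB.monotoneOn hs (Set.mem_Ici.2 (by linarith)) (by linarith)
  have h3 := (h (1 + s) (by linarith)).1
  have h4 : C * (1 + (1 + s)) ^ N ≤ C * 2 ^ N * (1 + s) ^ N := by
    rw [mul_assoc, ← mul_pow]
    gcongr
    linarith
  have h5 : |B 0| ≤ |B 0| * (1 + s) ^ N :=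
    le_mul_of_one_le_right (abs_nonneg _) (one_le_pow₀ (by linarith))
  rw [add_mul]
  have h6 := abs_le.1 (h3.trans h4)
  have h7 : 0 ≤ C * 2 ^ N * (1 + s) ^ N := by positivity
  refine abs_le.2 ⟨?_, ?_⟩ <;> linarith [neg_abs_le (B 0), abs_nonneg (B 0), h6.1, h6.2]

lemma isRadialProfile (hB : IsConvexProfile κ B) {ε : ℝ} (hε : 0 < ε) :
    IsRadialProfile κ (fun q => B √(q + ε ^ 2)) (fun q => deriv B √(q + ε ^ 2) / (2 * √(q + ε ^ 2)))
      (fun q => (√(q + ε ^ 2) * deriv (deriv B) √(q + ε ^ 2) - deriv B √(q + ε ^ 2))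
        / (4 * √(q + ε ^ 2) ^ 3)) := by
  have hR : ∀ q, 0 ≤ q → ε ≤ √(q + ε ^ 2) := fun q hq => Real.le_sqrt_of_sq_le (by linarith)
  have hR0 : ∀ q, 0 ≤ q → 0 < √(q + ε ^ 2) := fun q hq => hε.trans_le (hR q hq)
  have hsq : ∀ q, 0 ≤ q → √(q + ε ^ 2) ^ 2 = q + ε ^ 2 := fun q hq => Real.sq_sqrt (by positivity)
  have hRd : ∀ q, 0 ≤ q → HasDerivAt (fun q => √(q + ε ^ 2)) (1 / (2 * √(q + ε ^ 2))) q :=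
    fun q hq => ((hasDerivAt_id' q).add_const (ε ^ 2)).sqrt (by positivity)
  have hRc : ContinuousOn (fun q => √(q + ε ^ 2)) (Set.Ici 0) := by fun_prop
  refine ⟨fun q hq => ?_, fun q hq => ?_, ?_, ?_, fun q hq => ?_, fun q hq => ?_, fun q hq => ?_⟩
  · refine ((hB.hasDerivAt (hR0 q hq)).comp q (hRd q hq)).congr_deriv ?_
    ring
  · have h0 := hR0 q hq
    refine (((hB.hasDerivAt_deriv h0).comp q (hRd q hq)).div ((hRd q hq).const_mul 2)
      (by positivity)).congr_deriv ?_
    simp only [Function.comp_apply]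
    field_simp
    ring
  · have h1 : ContinuousOn (fun q => deriv B √(q + ε ^ 2)) (Set.Ici 0) :=
      hB.contDiffOn_deriv.continuousOn.comp hRc hR0
    have h2 : ContinuousOn (fun q => deriv (deriv B) √(q + ε ^ 2)) (Set.Ici 0) :=
      hB.continuousOn_deriv_deriv.comp hRc hR0
    exact ((hRc.mul h2).sub h1).div (continuousOn_const.mul (hRc.pow 3))
      fun q hq => by have := hR0 q hq; positivity
  · obtain ⟨C, N, hC, h⟩ := hB.bound ε hε
    refine ⟨C * (2 + ε ^ 2) ^ N * (1 + 1 / (2 * ε) + 1 / (4 * ε ^ 2) + 1 / (4 * ε ^ 3)), N,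
      fun q hq => ?_⟩
    obtain ⟨h1, h2, h3⟩ := h _ (hR q hq)
    have hr := hR q hq
    have hr0 := hR0 q hq
    have hle : C * (1 + √(q + ε ^ 2)) ^ N ≤ C * (2 + ε ^ 2) ^ N * (1 + q) ^ N := by
      rw [mul_assoc, ← mul_pow]
      gcongr
      nlinarith [hsq q hq, sq_nonneg (√(q + ε ^ 2) - 1), mul_nonneg hq (sq_nonneg ε)]
    replace h1 := h1.trans hle
    replace h2 := h2.trans hle
    replace h3 := h3.trans hle
    have p1 := hB.deriv_pos _ hr0
    have p2 := hB.deriv_deriv_pos _ hr0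
    generalize √(q + ε ^ 2) = R at *
    have hK : 0 ≤ C * (2 + ε ^ 2) ^ N * (1 + q) ^ N := by positivity
    rw [mul_right_comm]
    generalize C * (2 + ε ^ 2) ^ N * (1 + q) ^ N = K at *
    have i1 : 0 ≤ K * (1 / (2 * ε)) := by positivity
    have i2 : 0 ≤ K * (1 / (4 * ε ^ 2)) := by positivity
    have i3 : 0 ≤ K * (1 / (4 * ε ^ 3)) := by positivity
    simp only [mul_add, mul_one]
    refine ⟨by linarith, ?_, ?_⟩
    · have : deriv B R / (2 * R) ≤ K * (1 / (2 * ε)) := by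
        rw [mul_one_div]
        gcongr
      rw [abs_of_nonneg (by positivity)]
      linarith
    · have j1 : deriv (deriv B) R / (4 * R ^ 2) ≤ K * (1 / (4 * ε ^ 2)) := by
        rw [mul_one_div]
        gcongr
      have j2 : deriv B R / (4 * R ^ 3) ≤ K * (1 / (4 * ε ^ 3)) := by
        rw [mul_one_div]
        gcongr
      have e : (R * deriv (deriv B) R - deriv B R) / (4 * R ^ 3)
          = deriv (deriv B) R / (4 * R ^ 2) - deriv B R / (4 * R ^ 3) := by
        field_simp
      have k1 : 0 ≤ deriv (deriv B) R / (4 * R ^ 2) := by positivity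
      have k2 : 0 ≤ deriv B R / (4 * R ^ 3) := by positivity
      rw [e]
      refine abs_le.2 ⟨?_, ?_⟩ <;> linarith
  · have h0 := hR0 q hq
    have := hB.deriv_pos _ h0
    positivity
  · have h0 := hR0 q hq
    have p1 := hB.deriv_pos _ h0
    have p2 := hB.deriv_deriv_pos _ h0
    have hs := hsq q hq
    generalize √(q + ε ^ 2) = R at *
    have e : deriv B R / (2 * R) + 2 * q * ((R * deriv (deriv B) R - deriv B R) / (4 * R ^ 3))
        = (ε ^ 2 * deriv B R + q * (R * deriv (deriv B) R)) / (2 * R ^ 3) := by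
      field_simp
      linear_combination 4 * deriv B R * hs
    rw [e]
    positivity
  · have h0 := hR0 q hq
    have p1 := hB.deriv_pos _ h0
    have p2 := hB.deriv_deriv_pos _ h0
    have hs := hsq q hq
    have hr := hB.ratio _ h0
    generalize √(q + ε ^ 2) = R at *
    have e : deriv B R / (2 * R) + 2 * q * ((R * deriv (deriv B) R - deriv B R) / (4 * R ^ 3))
        = (ε ^ 2 * deriv B R + q * (R * deriv (deriv B) R)) / (2 * R ^ 3) := by
      field_simp
      linear_combination 4 * deriv B R * hs
    rw [e]
    have hq2 : q * q ≤ q * R ^ 2 := by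
      rw [hs]
      gcongr
      linarith [sq_nonneg ε]
    have key : (q * (R * deriv (deriv B) R - deriv B R)) ^ 2 ≤ 4 * κ ^ 2 * R ^ 2
        * (ε ^ 2 * deriv B R + q * (R * deriv (deriv B) R)) * deriv B R := by
      calc (q * (R * deriv (deriv B) R - deriv B R)) ^ 2
          = q * q * (R * deriv (deriv B) R - deriv B R) ^ 2 := by ring
        _ ≤ q * R ^ 2 * (4 * κ ^ 2 * (R * deriv (deriv B) R) * deriv B R) := by gcongr
        _ ≤ q * R ^ 2 * (4 * κ ^ 2 * (R * deriv (deriv B) R) * deriv B R)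
            + 4 * κ ^ 2 * R ^ 2 * (ε ^ 2 * deriv B R) * deriv B R :=
          le_add_of_nonneg_right (by positivity)
        _ = _ := by ring
    calc (q * ((R * deriv (deriv B) R - deriv B R) / (4 * R ^ 3))) ^ 2
        = (q * (R * deriv (deriv B) R - deriv B R)) ^ 2 / (16 * R ^ 6) := by
          field_simp
          ring
      _ ≤ (4 * κ ^ 2 * R ^ 2 * (ε ^ 2 * deriv B R + q * (R * deriv (deriv B) R)) * deriv B R)
          / (16 * R ^ 6) := by gcongr
      _ = _ := by
          field_simp
          ring

lemma aestronglyMeasurable_comp (hB : IsConvexProfile κ B) {k : ℕ} {u : (Fin k → ℝ) → ℝ}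
    (hu : Continuous u) (hu0 : ∀ x, 0 ≤ u x) :
    AEStronglyMeasurable (fun x => B (u x)) (gaussMeasure k) :=
  (hB.continuousOn.comp_continuous hu hu0).aestronglyMeasurable

lemma exists_eval_bound (hB : IsConvexProfile κ B) {k : ℕ} (G : MvPolynomial (Fin k) ℝ) :
    ∃ H : MvPolynomial (Fin k) ℝ, ∀ x r, 0 ≤ r → r ≤ MvPolynomial.eval x G →
      |B r| ≤ MvPolynomial.eval x H := by
  obtain ⟨C, N, hC, h⟩ := hB.exists_bound
  refine ⟨MvPolynomial.C C * (1 + G) ^ N, fun x r hr hrG => (h r hr).trans ?_⟩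
  simp only [map_mul, map_add, map_pow, map_one, MvPolynomial.eval_C]
  gcongr

lemma integrable_comp (hB : IsConvexProfile κ B) {k : ℕ} {u : (Fin k → ℝ) → ℝ}
    (hu : Continuous u) (hu0 : ∀ x, 0 ≤ u x) {G : MvPolynomial (Fin k) ℝ}
    (huG : ∀ x, u x ≤ MvPolynomial.eval x G) :
    Integrable (fun x => B (u x)) (gaussMeasure k) := by
  obtain ⟨H, hH⟩ := hB.exists_eval_bound G
  exact integrable_gaussMeasure_of_le_eval (hB.aestronglyMeasurable_comp hu hu0) H
    fun x => hH x _ (hu0 x) (huG x)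

lemma tendsto_integral_comp (hB : IsConvexProfile κ B) {k : ℕ} {ι : Type*} {l : Filter ι}
    [l.IsCountablyGenerated] {u : ι → (Fin k → ℝ) → ℝ} {v : (Fin k → ℝ) → ℝ}
    (hu : ∀ i, Continuous (u i)) (hu0 : ∀ i x, 0 ≤ u i x) (hv0 : ∀ x, 0 ≤ v x)
    {G : MvPolynomial (Fin k) ℝ} (huG : ∀ᶠ i in l, ∀ x, u i x ≤ MvPolynomial.eval x G)
    (hlim : ∀ x, Filter.Tendsto (fun i => u i x) l (nhds (v x))) :
    Filter.Tendsto (fun i => ∫ x, B (u i x) ∂(gaussMeasure k)) l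
      (nhds (∫ x, B (v x) ∂(gaussMeasure k))) := by
  obtain ⟨H, hH⟩ := hB.exists_eval_bound G
  refine tendsto_integral_filter_of_dominated_convergence (fun x => MvPolynomial.eval x H)
    (Filter.Eventually.of_forall fun i => hB.aestronglyMeasurable_comp (hu i) (hu0 i)) ?_
    (integrable_eval_gaussMeasure H) (Filter.Eventually.of_forall fun x => ?_)
  · filter_upwards [huG] with i hi
    exact Filter.Eventually.of_forall fun x => hH x _ (hu0 i x) (hi x)
  · exact (hB.continuousOn (v x) (hv0 x)).tendsto.comp
      (tendsto_nhdsWithin_iff.2 ⟨hlim x, Filter.Eventually.of_forall fun i => hu0 i x⟩)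

lemma tendsto_integral_regularization (hB : IsConvexProfile κ B) {k : ℕ} {u : (Fin k → ℝ) → ℝ}
    (hu : Continuous u) (hu0 : ∀ x, 0 ≤ u x) {G : MvPolynomial (Fin k) ℝ}
    (huG : ∀ x, u x ≤ MvPolynomial.eval x G) :
    Filter.Tendsto (fun ε : ℝ => ∫ x, B √(u x ^ 2 + ε ^ 2) ∂(gaussMeasure k))
      (nhdsWithin 0 (Set.Ioi 0)) (nhds (∫ x, B (u x) ∂(gaussMeasure k))) := by
  refine hB.tendsto_integral_comp (fun ε => by fun_prop) (fun ε x => Real.sqrt_nonneg _) hu0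
    (G := 1 + G) ?_ fun x => ?_
  · filter_upwards [Ioo_mem_nhdsGT one_pos] with ε hε x
    rw [map_add, map_one]
    refine Real.sqrt_le_iff.2 ⟨by linarith [hu0 x, huG x], ?_⟩
    nlinarith [hu0 x, huG x, hε.1, hε.2]
  · have h : Continuous fun ε : ℝ => √(u x ^ 2 + ε ^ 2) := by fun_prop
    have := (h.tendsto 0).mono_left (nhdsWithin_le_nhds (s := Set.Ioi 0))
    simpa [Real.sqrt_sq (hu0 x)] using this

end IsConvexProfile

lemma norm_sum_mul_eval_le {k d : ℕ} (Q : ℕ → MvPolynomial (Fin k) ℝ) (y : Fin (d + 1) → ℂ)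
    {A : ℝ} (hA : ‖y‖ ≤ A) (x : Fin k → ℝ) :
    ‖∑ n, y n * (MvPolynomial.eval x (Q n) : ℂ)‖ ≤
      MvPolynomial.eval x (∑ n : Fin (d + 1), MvPolynomial.C A * (1 + Q n ^ 2)) := by
  rw [map_sum]
  refine (norm_sum_le _ _).trans (Finset.sum_le_sum fun n _ => ?_)
  rw [norm_mul, Complex.norm_real, Real.norm_eq_abs, map_mul, MvPolynomial.eval_C]
  exact mul_le_mul ((norm_le_pi_norm y n).trans hA) (abs_eval_le_eval_one_add_sq _ _)
    (abs_nonneg _) ((norm_nonneg _).trans hA)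

lemma continuous_norm_sum_mul_eval {k d : ℕ} (Q : ℕ → MvPolynomial (Fin k) ℝ)
    (y : Fin (d + 1) → ℂ) :
    Continuous fun x : Fin k → ℝ => ‖∑ n, y n * (MvPolynomial.eval x (Q n) : ℂ)‖ :=
  Continuous.norm <| continuous_finsetSum _ fun n _ => Continuous.mul continuous_const <|
    Complex.continuous_ofReal.comp (MvPolynomial.continuous_eval (Q n))

namespace IsConvexProfile

variable {κ : ℝ} {B : ℝ → ℝ}

/-- The Mehler multipliers `wⁿ` with `w ∈ lens κ` are contractive for the modular `∫ B(|·|)`. -/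
theorem integral_mehler_le (hB : IsConvexProfile κ B) (hκ : 0 ≤ κ) {k d : ℕ}
    {Q : ℕ → MvPolynomial (Fin k) ℝ} (hQ : ∀ n ≤ d, ouOperator k (Q n) = -((n : ℝ) • Q n))
    {w : ℂ} (hw : w ∈ lens κ) :
    ∫ x, B ‖∑ n : Fin (d + 1), w ^ (n : ℕ) * (MvPolynomial.eval x (Q n) : ℂ)‖ ∂(gaussMeasure k)
      ≤ ∫ x, B |∑ n : Fin (d + 1), MvPolynomial.eval x (Q n)| ∂(gaussMeasure k) := by
  have h1 := hB.tendsto_integral_regularization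
    (continuous_norm_sum_mul_eval Q fun n : Fin (d + 1) => w ^ (n : ℕ))
    (fun x => norm_nonneg _) (norm_sum_mul_eval_le Q (fun n : Fin (d + 1) => w ^ (n : ℕ)) le_rfl)
  have hc : Continuous fun x => ∑ n : Fin (d + 1), MvPolynomial.eval x (Q n) :=
    continuous_finsetSum _ fun n _ => MvPolynomial.continuous_eval (Q n)
  have h2 := hB.tendsto_integral_regularization (k := k)
    (u := fun x => |∑ n : Fin (d + 1), MvPolynomial.eval x (Q n)|) hc.abs
    (fun x => abs_nonneg _) (G := 1 + (∑ n : Fin (d + 1), Q n) ^ 2)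
    (fun x => by simpa using abs_eval_le_eval_one_add_sq (∑ n : Fin (d + 1), Q n) x)
  refine le_of_tendsto_of_tendsto h1 h2 ?_
  filter_upwards [self_mem_nhdsWithin] with ε hε
  have h3 := (hB.isRadialProfile hε).integral_le hκ hQ hw
  simp only [Finset.sum_range] at h3
  simpa only [sq_abs] using h3

lemma integrable_modular (hB : IsConvexProfile κ B) {k d : ℕ} (Q : ℕ → MvPolynomial (Fin k) ℝ)
    {M : ℝ} (hM : 0 ≤ M) (y : Fin (d + 1) → ℂ) :
    Integrable (fun x : Fin k → ℝ => B (M * ‖∑ n, y n * (MvPolynomial.eval x (Q n) : ℂ)‖))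
      (gaussMeasure k) := by
  refine hB.integrable_comp ((continuous_norm_sum_mul_eval Q y).const_mul M)
    (fun x => by positivity)
    (G := MvPolynomial.C M * ∑ n : Fin (d + 1), MvPolynomial.C ‖y‖ * (1 + Q n ^ 2)) fun x => ?_
  rw [map_mul, MvPolynomial.eval_C]
  exact mul_le_mul_of_nonneg_left (norm_sum_mul_eval_le Q y le_rfl x) hM

lemma convex_modular_le (hB : IsConvexProfile κ B) {k d : ℕ} (Q : ℕ → MvPolynomial (Fin k) ℝ)
    {M : ℝ} (hM : 0 ≤ M) (r : ℝ) :
    Convex ℝ {y : Fin (d + 1) → ℂ |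
      ∫ x, B (M * ‖∑ n, y n * (MvPolynomial.eval x (Q n) : ℂ)‖) ∂(gaussMeasure k) ≤ r} := by
  have hint := fun y : Fin (d + 1) → ℂ => hB.integrable_modular Q hM y
  suffices h : ConvexOn ℝ Set.univ fun y : Fin (d + 1) → ℂ =>
      ∫ x, B (M * ‖∑ n, y n * (MvPolynomial.eval x (Q n) : ℂ)‖) ∂(gaussMeasure k) by
    simpa using h.convex_le r
  refine ⟨convex_univ, fun y _ z _ a b ha hb hab => ?_⟩
  simp only [smul_eq_mul]
  rw [← integral_const_mul, ← integral_const_mul,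
    ← integral_add ((hint y).const_mul a) ((hint z).const_mul b)]
  refine integral_mono (hint _) (((hint y).const_mul a).add ((hint z).const_mul b)) fun x => ?_
  set Y := ∑ n, y n * (MvPolynomial.eval x (Q n) : ℂ) with hY
  set Z := ∑ n, z n * (MvPolynomial.eval x (Q n) : ℂ) with hZ
  have e : ∑ n, (a • y + b • z) n * (MvPolynomial.eval x (Q n) : ℂ) = a • Y + b • Z := by
    rw [hY, hZ, Finset.smul_sum, Finset.smul_sum, ← Finset.sum_add_distrib]
    refine Finset.sum_congr rfl fun n _ => ?_
    simp only [Pi.add_apply, Pi.smul_apply, Complex.real_smul]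
    ring
  have hle : M * ‖a • Y + b • Z‖ ≤ a • (M * ‖Y‖) + b • (M * ‖Z‖) := by
    have := norm_add_le (a • Y) (b • Z)
    rw [norm_smul, norm_smul, Real.norm_of_nonneg ha, Real.norm_of_nonneg hb] at this
    simp only [smul_eq_mul]
    nlinarith
  have h1 := hB.monotoneOn (Set.mem_Ici.2 (by positivity)) (Set.mem_Ici.2 (by positivity)) hle
  have h2 := hB.convexOn.2 (x := M * ‖Y‖) (Set.mem_Ici.2 (by positivity)) (y := M * ‖Z‖)
    (Set.mem_Ici.2 (by positivity)) ha hb hab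
  simp only [e]
  exact h1.trans h2

lemma isClosed_modular_le (hB : IsConvexProfile κ B) {k d : ℕ}
    (Q : ℕ → MvPolynomial (Fin k) ℝ) {M : ℝ} (hM : 0 ≤ M) (r : ℝ) :
    IsClosed {y : Fin (d + 1) → ℂ |
      ∫ x, B (M * ‖∑ n, y n * (MvPolynomial.eval x (Q n) : ℂ)‖) ∂(gaussMeasure k) ≤ r} := by
  refine isClosed_le (continuous_iff_continuousAt.2 fun y => ?_) continuous_const
  refine hB.tendsto_integral_comp
    (fun z => (continuous_norm_sum_mul_eval Q z).const_mul M) (fun z x => by positivity)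
    (fun x => by positivity)
    (G := MvPolynomial.C M * ∑ n : Fin (d + 1), MvPolynomial.C (‖y‖ + 1) * (1 + Q n ^ 2)) ?_
    fun x => ?_
  · have : ∀ᶠ z : Fin (d + 1) → ℂ in nhds y, ‖z‖ < ‖y‖ + 1 :=
      continuous_norm.continuousAt.eventually_lt continuousAt_const (by linarith)
    filter_upwards [this] with z hz x
    rw [map_mul, MvPolynomial.eval_C]
    exact mul_le_mul_of_nonneg_left (norm_sum_mul_eval_le Q z hz.le x) hM
  · have : Continuous fun z : Fin (d + 1) → ℂ =>
        M * ‖∑ n, z n * (MvPolynomial.eval x (Q n) : ℂ)‖ := by fun_prop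
    exact this.tendsto y

/-- Bernstein–Markov estimate for the Ornstein–Uhlenbeck operator in the modular `∫ B(|·|)`. -/
theorem integral_ouOperator_le (hB : IsConvexProfile κ B) (hκ : 0 ≤ κ) {k : ℕ}
    (P : MvPolynomial (Fin k) ℝ) (hP : 1 ≤ P.totalDegree) :
    ∫ x, B |MvPolynomial.eval x (ouOperator k P)| ∂(gaussMeasure k) ≤
      ∫ x, B (10 * (P.totalDegree : ℝ) ^ lensExponent κ * |MvPolynomial.eval x P|)
        ∂(gaussMeasure k) := by
  obtain ⟨Q, hPQ, hQ⟩ := exists_ou_eigen_decomposition P.totalDegree P le_rfl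
  set d := P.totalDegree with hd
  set M : ℝ := 10 * (d : ℝ) ^ lensExponent κ with hMdef
  have hM : 0 < M := by
    have : (0 : ℝ) < d := by exact_mod_cast hP
    positivity
  have heval : ∀ x, MvPolynomial.eval x P = ∑ n : Fin (d + 1), MvPolynomial.eval x (Q n) := by
    intro x
    conv_lhs => rw [hPQ]
    rw [map_sum, Finset.sum_range]
  have hL : ∀ x, MvPolynomial.eval x (ouOperator k P)
      = -∑ n : Fin (d + 1), ((n : ℕ) : ℝ) * MvPolynomial.eval x (Q n) := by
    intro x
    conv_lhs => rw [hPQ]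
    rw [map_sum, map_sum, Finset.sum_range, ← Finset.sum_neg_distrib]
    refine Finset.sum_congr rfl fun n _ => ?_
    rw [hQ n (Nat.lt_succ_iff.1 n.2), map_neg, MvPolynomial.smul_eval]
  have hmem := derivative_functional_mem hκ hP
    (hB.convex_modular_le Q hM.le (∫ x, B (M * |MvPolynomial.eval x P|) ∂(gaussMeasure k)))
    (hB.isClosed_modular_le Q hM.le _) ?_
  · rw [Set.mem_ofPred_eq] at hmem
    refine le_of_eq_of_le ?_ hmem
    congr 1 with x
    congr 1
    have e : ∑ n : Fin (d + 1), (((10 * (d : ℝ) ^ lensExponent κ)⁻¹ : ℝ) : ℂ) * ((n : ℕ) : ℂ)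
        * (MvPolynomial.eval x (Q n) : ℂ) = ((M⁻¹ * ∑ n : Fin (d + 1),
          ((n : ℕ) : ℝ) * MvPolynomial.eval x (Q n) : ℝ) : ℂ) := by
      rw [Finset.mul_sum]
      push_cast
      refine Finset.sum_congr rfl fun n _ => ?_
      rw [hMdef]
      push_cast
      ring
    rw [e, Complex.norm_real, Real.norm_eq_abs, abs_mul, abs_of_pos (inv_pos.2 hM), hL, abs_neg,
      mul_inv_cancel_left₀ hM.ne']
  · intro w hw σ hσ
    rw [Set.mem_ofPred_eq]
    have h1 := hB.integral_mehler_le hκ (Q := fun n => MvPolynomial.C M * Q n) (d := d)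
      (fun n hn => by
        rw [← MvPolynomial.smul_eq_C_mul, map_smul, hQ n hn]
        module) hw
    have e1 : ∀ x, |∑ n : Fin (d + 1), MvPolynomial.eval x (MvPolynomial.C M * Q n)|
        = M * |MvPolynomial.eval x P| := by
      intro x
      simp only [map_mul, MvPolynomial.eval_C]
      rw [← Finset.mul_sum, abs_mul, abs_of_pos hM, heval]
    have e2 : ∀ x, ‖∑ n : Fin (d + 1), w ^ (n : ℕ) *
        ((MvPolynomial.eval x (MvPolynomial.C M * Q n) : ℝ) : ℂ)‖ = M * ‖∑ n : Fin (d + 1),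
          w ^ (n : ℕ) * (MvPolynomial.eval x (Q n) : ℂ)‖ := by
      intro x
      rw [← Real.norm_of_nonneg hM.le, ← Complex.norm_real M, ← norm_mul, Finset.mul_sum,
        Complex.norm_real M, Real.norm_of_nonneg hM.le]
      congr 1
      refine Finset.sum_congr rfl fun n _ => ?_
      rw [map_mul, MvPolynomial.eval_C]
      push_cast
      ring
    simp only [e1, e2] at h1
    refine le_trans ?_ h1
    have hint := fun y : Fin (d + 1) → ℂ => hB.integrable_modular Q hM.le y
    refine integral_mono (hint _) (hint fun n => w ^ (n : ℕ)) fun x => ?_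
    refine hB.monotoneOn (Set.mem_Ici.2 (by positivity)) (Set.mem_Ici.2 (by positivity)) ?_
    simp only [mul_assoc]
    rw [← Finset.mul_sum, norm_mul]
    exact mul_le_mul_of_nonneg_left (mul_le_of_le_one_left (norm_nonneg _) hσ) hM.le

end IsConvexProfile

lemma isConvexProfile_of_isLUB {B : ℝ → ℝ}
    (hBcont : ContinuousOn B (Set.Ici 0))
    (hBC2 : ContDiffOn ℝ 2 B (Set.Ioi 0))
    (hB' : ∀ s > (0 : ℝ), 0 < deriv B s)
    (hB'' : ∀ s > (0 : ℝ), 0 < deriv (deriv B) s)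
    (hgrowth : ∀ ε > (0 : ℝ), ∃ C N : ℝ, 0 < C ∧ 0 < N ∧ ∀ x > (0 : ℝ),
      max (max |B (x + ε)| (deriv B (x + ε))) (deriv (deriv B) (x + ε)) ≤ C * (1 + x ^ (2 * N)))
    {c : ℝ}
    (hc : IsLUB {y : ℝ | ∃ s > (0 : ℝ),
      y = s * deriv (deriv B) s / deriv B s + deriv B s / (s * deriv (deriv B) s)} c) :
    IsConvexProfile (√(c - 2) / 2) B := by
  have hle : ∀ s, 0 < s → (s * deriv (deriv B) s - deriv B s) ^ 2
      ≤ (c - 2) * (s * deriv (deriv B) s) * deriv B s := by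
    intro s hs
    have h1 := hB' s hs
    have h2 := mul_pos hs (hB'' s hs)
    have h := hc.1 ⟨s, hs, rfl⟩
    rw [div_add_div _ _ h1.ne' h2.ne', div_le_iff₀ (mul_pos h1 h2)] at h
    linarith
  have hc2 : 0 ≤ c - 2 := by
    have h1 := hB' 1 one_pos
    have h2 := mul_pos one_pos (hB'' 1 one_pos)
    have h := (sq_nonneg _).trans (hle 1 one_pos)
    rw [mul_assoc] at h
    exact nonneg_of_mul_nonneg_left h (mul_pos h2 h1)
  refine ⟨hBcont, hBC2, hB', hB'', fun ε hε => ?_, fun s hs => ?_⟩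
  · obtain ⟨C, N, hC, hN, h⟩ := hgrowth (ε / 2) (half_pos hε)
    refine ⟨2 * C, ⌈2 * N⌉₊, by positivity, fun s hs => ?_⟩
    have hx : 0 < s - ε / 2 := by linarith
    have hmax := h (s - ε / 2) hx
    rw [sub_add_cancel] at hmax
    have h1 : (s - ε / 2) ^ (2 * N) ≤ (1 + s) ^ ⌈2 * N⌉₊ := by
      rw [← Real.rpow_natCast]
      exact (Real.rpow_le_rpow hx.le (by linarith) (by positivity)).trans
        (Real.rpow_le_rpow_of_exponent_le (by linarith) (Nat.le_ceil _))
    have h2 : (1 : ℝ) ≤ (1 + s) ^ ⌈2 * N⌉₊ := one_le_pow₀ (by linarith)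
    have h3 : C * (1 + (s - ε / 2) ^ (2 * N)) ≤ 2 * C * (1 + s) ^ ⌈2 * N⌉₊ := by nlinarith
    have h4 := hmax.trans h3
    exact ⟨(le_max_left _ _).trans ((le_max_left _ _).trans h4),
      (le_max_right _ _).trans ((le_max_left _ _).trans h4), (le_max_right _ _).trans h4⟩
  · have e : 4 * (√(c - 2) / 2) ^ 2 = c - 2 := by
      rw [div_pow, Real.sq_sqrt hc2]
      ring
    rw [e]
    exact hle s hs

lemma OU_eq_eval_ouOperator {k : ℕ} (P : MvPolynomial (Fin k) ℝ) (x : Fin k → ℝ) :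
    OU P x = MvPolynomial.eval x (ouOperator k P) := by
  simp [OU, ouOperator_apply]

/-- General function Bernstein–Markov estimate for the Ornstein–Uhlenbeck operator. -/
theorem general_function_OU_estimate (B : ℝ → ℝ)
    (hBcont : ContinuousOn B (Set.Ici 0))
    (hBC2 : ContDiffOn ℝ 2 B (Set.Ioi 0))
    (hB' : ∀ s > (0 : ℝ), 0 < deriv B s)
    (hB'' : ∀ s > (0 : ℝ), 0 < deriv (deriv B) s)
    (hgrowth : ∀ ε > (0 : ℝ), ∃ C N : ℝ, 0 < C ∧ 0 < N ∧ ∀ x > (0 : ℝ),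
      max (max |B (x + ε)| (deriv B (x + ε))) (deriv (deriv B) (x + ε)) ≤ C * (1 + x ^ (2 * N)))
    (c : ℝ)
    (hc : IsLUB {y : ℝ | ∃ s > (0 : ℝ),
      y = s * deriv (deriv B) s / deriv B s + deriv B s / (s * deriv (deriv B) s)} c)
    (k : ℕ) (hk : 1 ≤ k) (P : MvPolynomial (Fin k) ℝ) :
    ∫ x, B (|OU P x|) ∂(gaussMeasure k) ≤
      ∫ x, B (10 * (P.totalDegree : ℝ) ^
          (1 + (2 / π) * Real.arctan (Real.sqrt (c - 2) / 2)) *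
        |MvPolynomial.eval x P|) ∂(gaussMeasure k) := by
  have hB := isConvexProfile_of_isLUB hBcont hBC2 hB' hB'' hgrowth hc
  have hκ : 0 ≤ √(c - 2) / 2 := by positivity
  change _ ≤ ∫ x, B (10 * (P.totalDegree : ℝ) ^ lensExponent (√(c - 2) / 2) *
    |MvPolynomial.eval x P|) ∂(gaussMeasure k)
  rcases Nat.eq_zero_or_pos P.totalDegree with h0 | hpos
  · have hα : lensExponent (√(c - 2) / 2) ≠ 0 :=
      (zero_lt_one.trans_le (one_le_lensExponent hκ)).ne'
    rw [MvPolynomial.totalDegree_eq_zero_iff_eq_C.1 h0]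
    simp [OU, Real.zero_rpow hα]
  · simp only [OU_eq_eval_ouOperator]
    exact hB.integral_ouOperator_le hκ P hpos
end

section
/- There exists a universal constant C > 0 such that for every integer k ≥ 1, every 0 < p < ∞, and every polynomial P on ℝ^k, one has ‖∇P‖_{L^p(γ_k)} ≤ C · (deg P)/√(p+1) · ‖P‖_{L^p(γ_k)}. -/
open MeasureTheory ProbabilityTheory Real

/-- The `L^p` norm with respect to the standard Gaussian measure on `ℝ^k`. -/
noncomputable def lpNormGauss {k : ℕ} (p : ℝ) (f : (Fin k → ℝ) → ℝ) : ℝ :=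
  (∫ x, |f x| ^ p ∂(gaussMeasure k)) ^ (1 / p)

/-- The Euclidean length of the gradient of a polynomial on `ℝ^k`. -/
noncomputable def gradNorm {k : ℕ} (P : MvPolynomial (Fin k) ℝ) (x : Fin k → ℝ) : ℝ :=
  Real.sqrt (∑ j, (MvPolynomial.eval x (MvPolynomial.pderiv j P)) ^ 2)

open Polynomial in
/-- The operator on polynomials corresponding to `-i d/dθ` on trigonometric polynomials
`e^{-inθ} q(e^{iθ})`. -/
noncomputable def angularDeriv (n : ℕ) (q : ℂ[X]) : ℂ[X] :=
  X * derivative q - C (n : ℂ) * q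

/-- Reflection in the unit circle of the points outside the closed unit disk. -/
noncomputable def diskReflection (w : ℂ) : ℂ :=
  if ‖w‖ ≤ 1 then w else (starRingEnd ℂ w)⁻¹

lemma norm_diskReflection_le_one (w : ℂ) : ‖diskReflection w‖ ≤ 1 := by
  unfold diskReflection
  split_ifs with h
  · exact h
  · rw [norm_inv, Complex.norm_conj]
    exact inv_le_one_of_one_le₀ (not_le.mp h).le

lemma norm_sub_eq_max_mul_norm_sub_diskReflection {z : ℂ} (hz : ‖z‖ = 1) (w : ℂ) :
    ‖z - w‖ = max 1 ‖w‖ * ‖z - diskReflection w‖ := by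
  unfold diskReflection
  split_ifs with h
  · rw [max_eq_left h, one_mul]
  · have h1 : 1 ≤ ‖w‖ := (not_le.mp h).le
    have hw : w ≠ 0 := by
      rintro rfl
      simp at h
    have hw' : (starRingEnd ℂ) w ≠ 0 := by simpa using hw
    have hzz : z * (starRingEnd ℂ) z = 1 := by
      rw [Complex.mul_conj, Complex.normSq_eq_norm_sq, hz]
      simp
    rw [max_eq_right h1, ← Complex.norm_conj w, ← norm_mul, mul_sub, mul_inv_cancel₀ hw']
    have : (starRingEnd ℂ) w * z - 1 = - z * (starRingEnd ℂ) (z - w) := by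
      rw [map_sub]
      linear_combination hzz
    rw [this, norm_mul, norm_neg, hz, one_mul, Complex.norm_conj]

lemma re_add_div_sub (z w : ℂ) :
    ((z + w) / (z - w)).re = (‖z‖ ^ 2 - ‖w‖ ^ 2) / ‖z - w‖ ^ 2 := by
  rw [Complex.div_re, ← Complex.normSq_eq_norm_sq, ← Complex.normSq_eq_norm_sq,
    ← Complex.normSq_eq_norm_sq, ← add_div]
  congr 1
  simp [Complex.normSq_apply]
  ring

lemma add_div_sub_diskReflection {z : ℂ} (hz : ‖z‖ = 1) (w : ℂ) :
    ((z + diskReflection w) / (z - diskReflection w)).re = |((z + w) / (z - w)).re| ∧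
      ((z + diskReflection w) / (z - diskReflection w)).im = ((z + w) / (z - w)).im := by
  have hre := re_add_div_sub z w
  unfold diskReflection
  split_ifs with h
  · refine ⟨?_, rfl⟩
    rw [abs_of_nonneg]
    rw [hre, hz]
    have := norm_nonneg w
    apply div_nonneg <;> nlinarith [sq_nonneg ‖z - w‖]
  · have h1 : 1 < ‖w‖ := not_le.mp h
    have hw : w ≠ 0 := by
      rintro rfl
      simp at h
    have hw' : (starRingEnd ℂ) w ≠ 0 := by simpa using hw
    have hzz : z * (starRingEnd ℂ) z = 1 := by
      rw [Complex.mul_conj, Complex.normSq_eq_norm_sq, hz]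
      simp
    have key : (z + ((starRingEnd ℂ) w)⁻¹) / (z - ((starRingEnd ℂ) w)⁻¹) =
        -(starRingEnd ℂ) ((z + w) / (z - w)) := by
      have e1 : z + ((starRingEnd ℂ) w)⁻¹ =
          z * ((starRingEnd ℂ) w)⁻¹ * (starRingEnd ℂ) (z + w) := by
        rw [map_add]
        field_simp
        linear_combination -hzz
      have e2 : z - ((starRingEnd ℂ) w)⁻¹ =
          -(z * ((starRingEnd ℂ) w)⁻¹ * (starRingEnd ℂ) (z - w)) := by
        rw [map_sub]
        field_simp
        linear_combination hzz
      have hz0 : z ≠ 0 := by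
        rintro rfl
        simp at hz
      rw [e1, e2, div_neg, mul_div_mul_left _ _ (mul_ne_zero hz0 (inv_ne_zero hw')), map_div₀]
    rw [key]
    constructor
    · rw [Complex.neg_re, Complex.conj_re, abs_of_nonpos]
      rw [hre, hz]
      apply div_nonpos_of_nonpos_of_nonneg <;> nlinarith [sq_nonneg ‖z - w‖]
    · rw [Complex.neg_im, Complex.conj_im, neg_neg]

lemma norm_sum_le_norm_sum_diskReflection {z : ℂ} (hz : ‖z‖ = 1) (s : Multiset ℂ) :
    ‖(s.map fun w => (z + w) / (z - w)).sum‖ ≤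
      ‖((s.map diskReflection).map fun w => (z + w) / (z - w)).sum‖ := by
  have key : |((s.map fun w => (z + w) / (z - w)).sum).re| ≤
      (((s.map diskReflection).map fun w => (z + w) / (z - w)).sum).re ∧
      (((s.map diskReflection).map fun w => (z + w) / (z - w)).sum).im =
      ((s.map fun w => (z + w) / (z - w)).sum).im := by
    induction s using Multiset.induction_on with
    | empty => simp
    | cons a s ih =>
      obtain ⟨h1, h2⟩ := add_div_sub_diskReflection hz a
      simp only [Multiset.map_cons, Multiset.sum_cons, Complex.add_re, Complex.add_im, h1, h2,
        ih.2, and_true]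
      exact (abs_add_le _ _).trans (add_le_add le_rfl ih.1)
  rw [← sq_le_sq₀ (norm_nonneg _) (norm_nonneg _),
    ← Complex.normSq_eq_norm_sq, ← Complex.normSq_eq_norm_sq, Complex.normSq_apply,
    Complex.normSq_apply, key.2]
  have := sq_le_sq' (neg_le_of_abs_le key.1) (le_of_abs_le key.1)
  nlinarith

open Polynomial in
lemma eval_angularDeriv {n : ℕ} {q : ℂ[X]} (hq : q.natDegree = 2 * n) {z : ℂ}
    (hz : q.eval z ≠ 0) :
    (angularDeriv n q).eval z =
      q.eval z * ((q.roots.map fun w => (z + w) / (z - w)).sum / 2) := by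
  have hs := IsAlgClosed.splits q
  have hd := hs.eval_derivative_div_eval_of_ne_zero hz
  have hcard : q.roots.card = 2 * n := by rw [← hs.natDegree_eq_card_roots, hq]
  have hsum : ∀ s : Multiset ℂ, (∀ w ∈ s, z ≠ w) →
      (s.map fun w => (z + w) / (z - w)).sum =
        2 * z * (s.map fun w => 1 / (z - w)).sum - s.card := by
    intro s
    induction s using Multiset.induction_on with
    | empty => simp
    | cons a s ih =>
      intro h
      have h1 : z - a ≠ 0 := sub_ne_zero.mpr (h a (by simp))
      simp only [Multiset.map_cons, Multiset.sum_cons, Multiset.card_cons,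
        ih fun w hw => h w (by simp [hw])]
      push_cast
      field_simp
      ring
  rw [hsum _ (by
    rintro w hw rfl
    exact hz (by simpa using (mem_roots'.mp hw).2)), ← hd, hcard]
  simp only [angularDeriv, eval_sub, eval_mul, eval_X, eval_C]
  push_cast
  field_simp

open Polynomial in
lemma ae_eval_circleMap_ne_zero {s : ℂ[X]} (hs : s ≠ 0) :
    ∀ᵐ θ ∂(volume.restrict (Set.Ioc 0 (2 * π))), s.eval (circleMap 0 1 θ) ≠ 0 := by
  rw [ae_restrict_iff' measurableSet_Ioc]
  have hfin : {θ : ℝ | θ ∈ Set.Ioc 0 (2 * π) ∧ s.eval (circleMap 0 1 θ) = 0}.Finite := by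
    have hinj : Set.InjOn (circleMap 0 1) (Set.Ioc 0 (2 * π)) := by
      have := injOn_circleMap_of_abs_sub_le (c := 0) (R := 1) one_ne_zero (a := 0) (b := 2 * π)
        (by rw [zero_sub, abs_neg, abs_of_pos two_pi_pos])
      rwa [Set.uIoc_of_le two_pi_pos.le] at this
    refine Set.Finite.of_finite_image (f := circleMap 0 1) ?_ (hinj.mono fun θ h => h.1)
    refine (s.roots.toFinset.finite_toSet).subset ?_
    rintro _ ⟨θ, h, rfl⟩
    simp [hs, h.2]
  refine measure_mono_null ?_ (hfin.measure_zero volume)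
  intro θ hθ
  simp only [Set.mem_compl_iff, Set.mem_ofPred_eq, Classical.not_imp, not_not] at hθ
  exact hθ

open Polynomial in
lemma mahlerMeasure_mono_of_norm_eval_le {p q s : ℂ[X]} (hs : s ≠ 0)
    (h : ∀ z : ℂ, ‖z‖ = 1 → s.eval z ≠ 0 → ‖p.eval z‖ ≤ ‖q.eval z‖) :
    p.mahlerMeasure ≤ q.mahlerMeasure := by
  rcases eq_or_ne p 0 with rfl | hp
  · simpa using mahlerMeasure_nonneg q
  have hle : ∀ᵐ θ ∂(volume.restrict (Set.Ioc 0 (2 * π))),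
      0 < ‖p.eval (circleMap 0 1 θ)‖ ∧
        ‖p.eval (circleMap 0 1 θ)‖ ≤ ‖q.eval (circleMap 0 1 θ)‖ := by
    filter_upwards [ae_eval_circleMap_ne_zero hp, ae_eval_circleMap_ne_zero hs] with θ h1 h2
    exact ⟨norm_pos_iff.mpr h1, h _ (by simp) h2⟩
  have hq : q ≠ 0 := by
    rintro rfl
    have : ∀ᵐ θ ∂(volume.restrict (Set.Ioc (0 : ℝ) (2 * π))), False := by
      filter_upwards [hle] with θ h
      simp at h
    rw [Filter.eventually_false_iff_eq_bot, ae_eq_bot, Measure.restrict_eq_zero] at this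
    simp [pi_pos.not_ge] at this
  rw [mahlerMeasure_def_of_ne_zero hp, mahlerMeasure_def_of_ne_zero hq]
  gcongr
  refine intervalIntegral.integral_mono_ae_restrict two_pi_pos.le
    (intervalIntegrable_mahlerMeasure p) (intervalIntegrable_mahlerMeasure q) ?_
  rw [← restrict_Ioc_eq_restrict_Icc]
  filter_upwards [hle] with θ h
  exact log_le_log h.1 h.2

open Polynomial in
/-- Multiplication of the Mahler measure by at most `n` under differentiation of trigonometric
polynomials of degree `n`. -/
lemma mahlerMeasure_angularDeriv_le {n : ℕ} (hn : 1 ≤ n) {q : ℂ[X]} (hq : q.natDegree = 2 * n) :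
    (angularDeriv n q).mahlerMeasure ≤ n * q.mahlerMeasure := by
  have hq0 : q ≠ 0 := by
    rintro rfl
    simp at hq
    omega
  have hs := IsAlgClosed.splits q
  have hcard : q.roots.card = 2 * n := by rw [← hs.natDegree_eq_card_roots, hq]
  set U : Multiset ℂ := q.roots.map diskReflection with hU
  set R : ℂ[X] := (U.map fun w => X - C w).prod with hR
  have hRroots : R.roots = U := roots_multiset_prod_X_sub_C U
  have hRdeg : R.natDegree = 2 * n := by
    rw [hR, natDegree_multiset_prod_X_sub_C_eq_card, hU, Multiset.card_map, hcard]
  have hRmonic : R.Monic := monic_multiset_prod_of_monic _ _ fun w _ => monic_X_sub_C w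
  have hUle : ∀ w ∈ U, ‖w‖ ≤ 1 := by
    intro w hw
    obtain ⟨v, -, rfl⟩ := Multiset.mem_map.mp hw
    exact norm_diskReflection_le_one v
  have hnorm : ∀ z : ℂ, ‖z‖ = 1 → ‖q.eval z‖ = q.mahlerMeasure * ‖R.eval z‖ := by
    intro z hz
    rw [mahlerMeasure_eq_leadingCoeff_mul_prod_roots, hs.eval_eq_prod_roots, norm_mul, mul_assoc]
    congr 1
    rw [hR, eval_multiset_prod, hU, Multiset.map_map, Multiset.map_map]
    generalize q.roots = S
    induction S using Multiset.induction_on with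
    | empty => simp
    | cons a S ih =>
      simp only [Multiset.map_cons, Multiset.prod_cons, norm_mul, Function.comp_apply, eval_sub,
        eval_X, eval_C] at ih ⊢
      rw [ih, norm_sub_eq_max_mul_norm_sub_diskReflection hz a]
      ring
  have hΛcoeff : (angularDeriv n R).coeff (2 * n) = n := by
    obtain ⟨m, hm⟩ : ∃ m, 2 * n = m + 1 := ⟨2 * n - 1, by omega⟩
    have hc : R.coeff (2 * n) = 1 := by
      rw [← hRdeg]
      exact hRmonic
    have hmm : (m : ℂ) + 1 = 2 * n := by exact_mod_cast hm.symm
    rw [angularDeriv, coeff_sub, coeff_C_mul, hc, hm, coeff_X_mul, coeff_derivative, ← hm, hc, hmm]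
    ring
  have hΛdeg : (angularDeriv n R).natDegree ≤ 2 * n := by
    unfold angularDeriv
    refine (natDegree_sub_le _ _).trans (max_le ?_ ?_)
    · refine natDegree_mul_le.trans ?_
      have := natDegree_derivative_le R
      rw [hRdeg] at this
      rw [natDegree_X]
      omega
    · exact (natDegree_C_mul_le _ _).trans hRdeg.le
  have hn0 : (n : ℂ) ≠ 0 := by
    simp
    omega
  have hΛdeg' : (angularDeriv n R).natDegree = 2 * n :=
    le_antisymm hΛdeg (le_natDegree_of_ne_zero (hΛcoeff ▸ hn0))
  have hΛR : (angularDeriv n R).mahlerMeasure = n := by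
    rw [mahlerMeasure_eq_leadingCoeff_mul_prod_roots, leadingCoeff, hΛdeg', hΛcoeff]
    rw [Multiset.prod_eq_one, mul_one]
    · simp
    · intro x hx
      obtain ⟨z, hz, rfl⟩ := Multiset.mem_map.mp hx
      refine max_eq_left ?_
      by_contra! hz1
      have hRz : R.eval z ≠ 0 := by
        intro h0
        have : z ∈ R.roots := (mem_roots hRmonic.ne_zero).mpr h0
        exact absurd (hUle z (hRroots ▸ this)) (not_le.mpr hz1)
      have hz0 := (mem_roots'.mp hz).2
      rw [IsRoot, eval_angularDeriv hRdeg hRz, mul_eq_zero, or_iff_right hRz, hRroots,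
        div_eq_zero_iff, or_iff_left two_ne_zero] at hz0
      have hpos : ∀ S : Multiset ℂ, (∀ w ∈ S, ‖w‖ ≤ 1) → S ≠ 0 →
          0 < ((S.map fun w => (z + w) / (z - w)).sum).re := by
        intro S
        induction S using Multiset.induction_on with
        | empty => simp
        | cons a S ih =>
          intro h _
          have ha : 0 < ((z + a) / (z - a)).re := by
            have ha1 := h a (by simp)
            rw [re_add_div_sub]
            have : 0 < ‖z - a‖ := by
              have := norm_sub_norm_le z a
              linarith
            have := norm_nonneg a
            apply div_pos
            · nlinarith
            · positivity
          rcases eq_or_ne S 0 with rfl | hS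
          · simpa using ha
          · have := ih (fun w hw => h w (by simp [hw])) hS
            simp only [Multiset.map_cons, Multiset.sum_cons, Complex.add_re]
            linarith
      have := hpos U hUle (by
        rw [← Multiset.card_pos, hU, Multiset.card_map, hcard]
        omega)
      rw [hz0] at this
      simp at this
  have hM := mahlerMeasure_pos_of_ne_zero hq0
  calc (angularDeriv n q).mahlerMeasure
      ≤ (C (q.mahlerMeasure : ℂ) * angularDeriv n R).mahlerMeasure := by
        refine mahlerMeasure_mono_of_norm_eval_le hq0 fun z hz hqz => ?_
        have hRz : R.eval z ≠ 0 := by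
          intro h0
          have := hnorm z hz
          rw [h0, norm_zero, mul_zero, norm_eq_zero] at this
          exact hqz this
        rw [eval_mul, eval_C, eval_angularDeriv hq hqz, eval_angularDeriv hRdeg hRz, hRroots,
          norm_mul, norm_mul, norm_mul, hnorm z hz, Complex.norm_real, norm_of_nonneg hM.le,
          mul_assoc, norm_div, norm_div]
        gcongr
        exact norm_sum_le_norm_sum_diskReflection hz _
    _ = n * q.mahlerMeasure := by
        rw [mahlerMeasure_mul, mahlerMeasure_const, hΛR, Complex.norm_real, norm_of_nonneg hM.le,
          mul_comm]

/-- Lebesgue measure on the interval `(0, 2π]` of angles. -/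
noncomputable def angleMeasure : Measure ℝ := volume.restrict (Set.Ioc 0 (2 * π))

instance : IsFiniteMeasure angleMeasure := by
  unfold angleMeasure
  infer_instance

lemma angleMeasure_real_univ : angleMeasure.real Set.univ = 2 * π := by
  simp [angleMeasure, Measure.real, pi_pos.le]

lemma integral_angleMeasure_eq_circleAverage (f : ℂ → ℝ) :
    ∫ θ, f (circleMap 0 1 θ) ∂angleMeasure = 2 * π * circleAverage f 0 1 := by
  rw [circleAverage_def, intervalIntegral.integral_of_le two_pi_pos.le, smul_eq_mul, ← mul_assoc,
    mul_inv_cancel₀ two_pi_pos.ne', one_mul, angleMeasure]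

lemma CircleIntegrable.integrable_angleMeasure {f : ℂ → ℝ} (hf : CircleIntegrable f 0 1) :
    Integrable (fun θ => f (circleMap 0 1 θ)) angleMeasure := by
  rw [circleIntegrable_def, intervalIntegrable_iff_integrableOn_Ioc_of_le two_pi_pos.le] at hf
  exact hf

open Polynomial in
lemma integral_log_norm_add_circleMap (q : ℂ[X]) (N : ℕ) (θ : ℝ) :
    Integrable (fun φ => log ‖(q + C (circleMap 0 1 φ) * X ^ N).eval (circleMap 0 1 θ)‖)
      angleMeasure ∧
    ∫ φ, log ‖(q + C (circleMap 0 1 φ) * X ^ N).eval (circleMap 0 1 θ)‖ ∂angleMeasure =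
      2 * π * log⁺ ‖q.eval (circleMap 0 1 θ)‖ := by
  set z := circleMap 0 1 θ with hz
  have hz1 : ‖z‖ = 1 := by simp [hz]
  have hz0 : z ^ N ≠ 0 := by
    apply pow_ne_zero
    rw [← norm_pos_iff, hz1]
    exact one_pos
  have hrw : ∀ c : ℂ, log ‖(q + C c * X ^ N).eval z‖ = log ‖c + q.eval z / z ^ N‖ := by
    intro c
    have : (q + C c * X ^ N).eval z = (c + q.eval z / z ^ N) * z ^ N := by
      simp
      field_simp
      ring
    rw [this, norm_mul, norm_pow, hz1, one_pow, mul_one]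
  simp only [hrw]
  constructor
  · apply CircleIntegrable.integrable_angleMeasure (f := fun c => log ‖c + q.eval z / z ^ N‖)
    have : MeromorphicOn (fun c : ℂ => c + q.eval z / z ^ N) (Metric.sphere 0 |1|) := by
      intro c _
      fun_prop
    exact this.circleIntegrable_log_norm
  · rw [integral_angleMeasure_eq_circleAverage (fun c => log ‖c + q.eval z / z ^ N‖),
      circleAverage_log_norm_add_const_eq_posLog, norm_div, norm_pow, hz1, one_pow, div_one]

open Polynomial in
lemma continuous_eval_add_circleMap (q : ℂ[X]) (N : ℕ) :
    Continuous fun x : ℝ × ℝ =>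
      (q + C (circleMap 0 1 x.2) * X ^ N).eval (circleMap 0 1 x.1) := by
  have h1 : Continuous fun x : ℝ × ℝ => circleMap 0 1 x.1 :=
    (continuous_circleMap 0 1).comp continuous_fst
  have h2 : Continuous fun x : ℝ × ℝ => circleMap 0 1 x.2 :=
    (continuous_circleMap 0 1).comp continuous_snd
  simp only [eval_add, eval_mul, eval_C, eval_pow, eval_X]
  exact (q.continuous.comp h1).add (h2.mul (h1.pow N))

lemma abs_log_eq_two_mul_posLog_sub_log (x : ℝ) : |log x| = 2 * log⁺ x - log x := by
  change |log x| = 2 * max 0 (log x) - log x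
  rcases le_total 0 (log x) with h | h
  · rw [max_eq_right h, abs_of_nonneg h]
    ring
  · rw [max_eq_left h, abs_of_nonpos h]
    ring

open Polynomial in
lemma integrable_log_norm_add_circleMap (q : ℂ[X]) (N : ℕ) :
    Integrable (fun x : ℝ × ℝ =>
      log ‖(q + C (circleMap 0 1 x.2) * X ^ N).eval (circleMap 0 1 x.1)‖)
      (angleMeasure.prod angleMeasure) := by
  have hmeas : AEStronglyMeasurable (fun x : ℝ × ℝ =>
      log ‖(q + C (circleMap 0 1 x.2) * X ^ N).eval (circleMap 0 1 x.1)‖)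
      (angleMeasure.prod angleMeasure) :=
    (measurable_log.comp (continuous_eval_add_circleMap q N).norm.measurable).aestronglyMeasurable
  obtain ⟨B, hB⟩ : ∃ B, ∀ z : ℂ, ‖z‖ = 1 → ‖q.eval z‖ ≤ B := by
    obtain ⟨B, hB⟩ := (isCompact_sphere (0 : ℂ) 1).exists_bound_of_continuousOn
      q.continuous.continuousOn
    exact ⟨B, fun z hz => hB z (by simpa using hz)⟩
  rw [integrable_prod_iff hmeas]
  refine ⟨Filter.Eventually.of_forall fun θ => (integral_log_norm_add_circleMap q N θ).1, ?_⟩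
  refine Integrable.of_bound (C := 2 * π * (2 * log⁺ (B + 1)))
    (hmeas.norm.integral_prod_right') (Filter.Eventually.of_forall fun θ => ?_)
  obtain ⟨h1, h2⟩ := integral_log_norm_add_circleMap q N θ
  rw [norm_of_nonneg (integral_nonneg fun _ => norm_nonneg _)]
  calc ∫ φ, ‖log ‖(q + C (circleMap 0 1 φ) * X ^ N).eval (circleMap 0 1 θ)‖‖ ∂angleMeasure
      ≤ ∫ φ, (2 * log⁺ (B + 1) -
          log ‖(q + C (circleMap 0 1 φ) * X ^ N).eval (circleMap 0 1 θ)‖) ∂angleMeasure := by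
        refine integral_mono h1.norm ((integrable_const _).sub h1) fun φ => ?_
        simp only [norm_eq_abs]
        rw [abs_log_eq_two_mul_posLog_sub_log]
        gcongr
        rw [eval_add, eval_mul, eval_C, eval_pow, eval_X]
        refine (norm_add_le _ _).trans (add_le_add (hB _ (by simp)) ?_)
        simp
    _ ≤ 2 * π * (2 * log⁺ (B + 1)) := by
        rw [integral_sub (integrable_const _) h1, h2, integral_const, angleMeasure_real_univ,
          smul_eq_mul]
        have : 0 ≤ 2 * π * log⁺ ‖q.eval (circleMap 0 1 θ)‖ :=
          mul_nonneg two_pi_pos.le posLog_nonneg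
        linarith

open Polynomial in
lemma integral_posLog_norm_eval_eq_integral_logMahlerMeasure (q : ℂ[X]) (N : ℕ) :
    Integrable (fun φ => (q + C (circleMap 0 1 φ) * X ^ N).logMahlerMeasure) angleMeasure ∧
    ∫ θ, log⁺ ‖q.eval (circleMap 0 1 θ)‖ ∂angleMeasure =
      ∫ φ, (q + C (circleMap 0 1 φ) * X ^ N).logMahlerMeasure ∂angleMeasure := by
  have hInt := integrable_log_norm_add_circleMap q N
  have h1 : ∀ φ, (q + C (circleMap 0 1 φ) * X ^ N).logMahlerMeasure = (2 * π)⁻¹ *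
      ∫ θ, log ‖(q + C (circleMap 0 1 φ) * X ^ N).eval (circleMap 0 1 θ)‖ ∂angleMeasure := by
    intro φ
    have := integral_angleMeasure_eq_circleAverage
      fun z : ℂ => log ‖(q + C (circleMap 0 1 φ) * X ^ N).eval z‖
    rw [this, ← logMahlerMeasure_def, inv_mul_cancel_left₀ two_pi_pos.ne']
  simp only [h1]
  refine ⟨hInt.integral_prod_right.const_mul _, ?_⟩
  have hswap := integral_integral_swap (f := fun θ φ : ℝ =>
    (log ‖(q + C (circleMap 0 1 φ) * X ^ N).eval (circleMap 0 1 θ)‖ : ℝ))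
    (μ := angleMeasure) (ν := angleMeasure) (by exact hInt)
  rw [integral_const_mul, ← hswap]
  simp only [(integral_log_norm_add_circleMap q N _).2]
  rw [integral_const_mul, inv_mul_cancel_left₀ two_pi_pos.ne']

open Polynomial in
lemma integral_posLog_angularDeriv_le {n : ℕ} (hn : 1 ≤ n) {q : ℂ[X]}
    (hq : q.natDegree ≤ 2 * n) :
    ∫ θ, log⁺ ‖(C (n : ℂ)⁻¹ * angularDeriv n q).eval (circleMap 0 1 θ)‖ ∂angleMeasure ≤
      ∫ θ, log⁺ ‖q.eval (circleMap 0 1 θ)‖ ∂angleMeasure := by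
  have hn0 : (n : ℂ) ≠ 0 := by
    simp
    omega
  obtain ⟨i1, e1⟩ := integral_posLog_norm_eval_eq_integral_logMahlerMeasure q (2 * n)
  obtain ⟨i2, e2⟩ := integral_posLog_norm_eval_eq_integral_logMahlerMeasure
    (C (n : ℂ)⁻¹ * angularDeriv n q) (2 * n)
  rw [e1, e2]
  refine integral_mono_ae i2 i1 ?_
  have hne : ∀ᵐ φ ∂angleMeasure, (X + C (q.coeff (2 * n))).eval (circleMap 0 1 φ) ≠ 0 :=
    ae_eval_circleMap_ne_zero (X_add_C_ne_zero _)
  filter_upwards [hne] with φ hφ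
  set c := circleMap 0 1 φ
  have hcoeff : (q + C c * X ^ (2 * n)).coeff (2 * n) ≠ 0 := by
    simpa [add_comm] using hφ
  have hdeg : (q + C c * X ^ (2 * n)).natDegree = 2 * n :=
    le_antisymm ((natDegree_add_le _ _).trans (max_le hq (natDegree_C_mul_X_pow_le _ _)))
      (le_natDegree_of_ne_zero hcoeff)
  have hΛ : C (n : ℂ) * (C (n : ℂ)⁻¹ * angularDeriv n q + C c * X ^ (2 * n)) =
      angularDeriv n (q + C c * X ^ (2 * n)) := by
    obtain ⟨m, hm⟩ : ∃ m, 2 * n = m + 1 := ⟨2 * n - 1, by omega⟩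
    have hmm : (m : ℂ) + 1 = 2 * n := by exact_mod_cast hm.symm
    have hC : C (n : ℂ) * C (n : ℂ)⁻¹ = 1 := by
      rw [← C_mul, mul_inv_cancel₀ hn0, C_1]
    have hd : X * derivative (C c * X ^ (2 * n)) = C (2 * (n : ℂ)) * C c * X ^ (2 * n) := by
      rw [derivative_C_mul_X_pow, hm, Nat.add_sub_cancel, C_mul, pow_succ]
      push_cast
      rw [hmm, C_mul]
      ring
    have h2 : C (2 * (n : ℂ)) = 2 * C (n : ℂ) := by
      rw [C_mul]
      rfl
    simp only [angularDeriv, derivative_add, mul_add, hd, h2]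
    linear_combination (X * derivative q - C (n : ℂ) * q) * hC
  have hle := mahlerMeasure_angularDeriv_le hn hdeg
  rw [← hΛ, mahlerMeasure_mul, mahlerMeasure_const, Complex.norm_natCast] at hle
  have hle' := le_of_mul_le_mul_left hle (by exact_mod_cast hn)
  have hne0 : C (n : ℂ)⁻¹ * angularDeriv n q + C c * X ^ (2 * n) ≠ 0 := by
    intro h0
    rw [h0, mul_zero] at hΛ
    have := congrArg (fun r => r.coeff (2 * n)) hΛ
    obtain ⟨m, hm⟩ : ∃ m, 2 * n = m + 1 := ⟨2 * n - 1, by omega⟩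
    have hmm : (m : ℂ) + 1 = 2 * n := by exact_mod_cast hm.symm
    simp only [angularDeriv, coeff_sub, coeff_C_mul, coeff_zero] at this
    rw [hm, coeff_X_mul, coeff_derivative, hmm, ← hm] at this
    have h3 : (n : ℂ) * (q + C c * X ^ (2 * n)).coeff (2 * n) = 0 := by
      linear_combination -this
    exact (mul_ne_zero hn0 hcoeff) h3
  rw [logMahlerMeasure_eq_log_MahlerMeasure, logMahlerMeasure_eq_log_MahlerMeasure]
  exact log_le_log (mahlerMeasure_pos_of_ne_zero hne0) hle'

lemma lintegral_posLog_mul_exp {p : ℝ} (hp : 0 < p) {u : ℝ} (hu : 0 ≤ u) :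
    ∫⁻ t : ℝ, ENNReal.ofReal (log⁺ (exp (-t) * u)) * ENNReal.ofReal (exp (p * t)) =
      ENNReal.ofReal (u ^ p) *
        ∫⁻ t : ℝ, ENNReal.ofReal (max 0 (-t)) * ENNReal.ofReal (exp (p * t)) := by
  rcases hu.eq_or_lt with rfl | hu
  · simp [zero_rpow hp.ne']
  rw [← lintegral_add_right_eq_self _ (log u), ← lintegral_const_mul']
  · congr 1
    ext t
    have h1 : log⁺ (exp (-(t + log u)) * u) = max 0 (-t) := by
      change max 0 (log _) = _
      rw [log_mul (exp_pos _).ne' hu.ne', log_exp]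
      ring_nf
    have h2 : exp (p * (t + log u)) = u ^ p * exp (p * t) := by
      rw [rpow_def_of_pos hu, ← exp_add]
      ring_nf
    rw [h1, h2, ENNReal.ofReal_mul (by positivity)]
    ring
  · simp

lemma lintegral_max_neg_mul_exp_ne {p : ℝ} (hp : 0 < p) :
    ∫⁻ t : ℝ, ENNReal.ofReal (max 0 (-t)) * ENNReal.ofReal (exp (p * t)) ≠ 0 ∧
    ∫⁻ t : ℝ, ENNReal.ofReal (max 0 (-t)) * ENNReal.ofReal (exp (p * t)) ≠ ⊤ := by
  constructor
  · intro h0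
    rw [lintegral_eq_zero_iff (by fun_prop)] at h0
    have h1 : volume (Set.Iio (0 : ℝ)) = 0 := by
      refine measure_mono_null (fun t ht => ?_) h0
      have ht' : 0 < -t := neg_pos.mpr ht
      simp only [Set.mem_compl_iff, Set.mem_ofPred_eq, Pi.zero_apply, mul_eq_zero,
        ENNReal.ofReal_eq_zero, not_or, not_le]
      exact ⟨lt_max_of_lt_right ht', exp_pos _⟩
    simp at h1
  · refine ne_top_of_le_ne_top (b := ENNReal.ofReal (2 / p) *
      ∫⁻ t in Set.Iic (0 : ℝ), ENNReal.ofReal (exp (p / 2 * t))) ?_ ?_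
    · refine ENNReal.mul_ne_top ENNReal.ofReal_ne_top ?_
      exact (integrableOn_exp_mul_Iic (half_pos hp) 0).lintegral_lt_top.ne
    · rw [← lintegral_indicator measurableSet_Iic, ← lintegral_const_mul' _ _ ENNReal.ofReal_ne_top]
      refine lintegral_mono fun t => ?_
      by_cases ht : t ≤ 0
      · simp only [Set.mem_Iic, ht, Set.indicator_of_mem]
        rw [← ENNReal.ofReal_mul (by positivity), ← ENNReal.ofReal_mul (by positivity)]
        apply ENNReal.ofReal_le_ofReal
        rw [max_eq_right (by linarith)]
        have h1 : -(p / 2 * t) ≤ exp (-(p / 2 * t)) := by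
          linarith [add_one_le_exp (-(p / 2 * t))]
        have h2 : exp (p * t) = exp (p / 2 * t) * exp (p / 2 * t) := by
          rw [← exp_add]
          ring_nf
        have h3 : exp (-(p / 2 * t)) * exp (p / 2 * t) = 1 := by
          rw [← exp_add]
          simp
        have h4 : -t = 2 / p * (-(p / 2 * t)) := by
          field_simp
        rw [h2, h4]
        calc 2 / p * (-(p / 2 * t)) * (exp (p / 2 * t) * exp (p / 2 * t))
            ≤ 2 / p * exp (-(p / 2 * t)) * (exp (p / 2 * t) * exp (p / 2 * t)) := by gcongr
          _ = 2 / p * exp (p / 2 * t) := by linear_combination (2 / p * exp (p / 2 * t)) * h3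
      · rw [max_eq_left (by linarith)]
        simp

/-- Inequalities between all integrals of `log⁺ (c f)` pass to `L^p` norms. -/
lemma lintegral_rpow_le_of_lintegral_posLog_le {α : Type*} [MeasurableSpace α] {μ : Measure α}
    [SFinite μ] {f g : α → ℝ} (hf : Measurable f) (hg : Measurable g) (hf0 : ∀ x, 0 ≤ f x)
    (hg0 : ∀ x, 0 ≤ g x)
    (h : ∀ c : ℝ, 0 < c → ∫⁻ x, ENNReal.ofReal (log⁺ (c * f x)) ∂μ ≤
      ∫⁻ x, ENNReal.ofReal (log⁺ (c * g x)) ∂μ) {p : ℝ} (hp : 0 < p) :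
    ∫⁻ x, ENNReal.ofReal (f x ^ p) ∂μ ≤ ∫⁻ x, ENNReal.ofReal (g x ^ p) ∂μ := by
  obtain ⟨hK0, hKtop⟩ := lintegral_max_neg_mul_exp_ne hp
  set K := ∫⁻ t : ℝ, ENNReal.ofReal (max 0 (-t)) * ENNReal.ofReal (exp (p * t)) with hK
  have key : ∀ f : α → ℝ, Measurable f → (∀ x, 0 ≤ f x) →
      (∫⁻ x, ENNReal.ofReal (f x ^ p) ∂μ) * K = ∫⁻ t : ℝ,
        (∫⁻ x, ENNReal.ofReal (log⁺ (exp (-t) * f x)) ∂μ) * ENNReal.ofReal (exp (p * t)) := by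
    intro f hf hf0
    have hm : Measurable fun x : α × ℝ => ENNReal.ofReal (log⁺ (exp (-x.2) * f x.1)) :=
      (continuous_posLog.measurable.comp ((measurable_exp.comp measurable_snd.neg).mul
        (hf.comp measurable_fst))).ennreal_ofReal
    rw [← lintegral_mul_const' _ _ hKtop]
    simp_rw [hK, ← lintegral_posLog_mul_exp hp (hf0 _),
      ← lintegral_mul_const' _ _ ENNReal.ofReal_ne_top]
    refine lintegral_lintegral_swap ?_
    exact (hm.mul (by fun_prop)).aemeasurable
  rw [← ENNReal.mul_le_mul_iff_left hK0 hKtop, key f hf hf0, key g hg hg0]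
  exact lintegral_mono fun t => mul_le_mul_left (h _ (exp_pos (-t))) _

open Polynomial in
/-- Bernstein's inequality in `L^p`, `0 < p < ∞`, for trigonometric polynomials
`e^{-inθ} q(e^{iθ})`. -/
lemma lintegral_angularDeriv_rpow_le {n : ℕ} (hn : 1 ≤ n) {q : ℂ[X]} (hq : q.natDegree ≤ 2 * n)
    {p : ℝ} (hp : 0 < p) :
    ∫⁻ θ, ENNReal.ofReal (‖(angularDeriv n q).eval (circleMap 0 1 θ)‖ ^ p) ∂angleMeasure ≤
      ENNReal.ofReal ((n : ℝ) ^ p) *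
        ∫⁻ θ, ENNReal.ofReal (‖q.eval (circleMap 0 1 θ)‖ ^ p) ∂angleMeasure := by
  have hn0 : (n : ℝ) ≠ 0 := by
    simp
    omega
  have hcont : ∀ r : ℂ[X], Continuous fun θ : ℝ => ‖r.eval (circleMap 0 1 θ)‖ := fun r =>
    (r.continuous.comp (continuous_circleMap 0 1)).norm
  have hInt : ∀ r : ℂ[X], Integrable (fun θ : ℝ => log⁺ ‖r.eval (circleMap 0 1 θ)‖)
      angleMeasure := fun r =>
    ((continuous_posLog.comp (hcont r)).integrableOn_Ioc)
  have hofReal : ∀ r : ℂ[X], ∫⁻ θ, ENNReal.ofReal (log⁺ ‖r.eval (circleMap 0 1 θ)‖) ∂angleMeasure =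
      ENNReal.ofReal (∫ θ, log⁺ ‖r.eval (circleMap 0 1 θ)‖ ∂angleMeasure) := fun r =>
    (ofReal_integral_eq_lintegral_ofReal (hInt r)
      (Filter.Eventually.of_forall fun _ => posLog_nonneg)).symm
  have h := lintegral_rpow_le_of_lintegral_posLog_le (μ := angleMeasure)
    (hcont (C (n : ℂ)⁻¹ * angularDeriv n q)).measurable (hcont q).measurable
    (fun _ => norm_nonneg _) (fun _ => norm_nonneg _) (fun c hc => by
      have e1 : ∀ (r : ℂ[X]) (θ : ℝ), c * ‖r.eval (circleMap 0 1 θ)‖ =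
          ‖(C (c : ℂ) * r).eval (circleMap 0 1 θ)‖ := fun r θ => by
        rw [eval_mul, eval_C, norm_mul, Complex.norm_real, norm_of_nonneg hc.le]
      have e2 : C (c : ℂ) * (C (n : ℂ)⁻¹ * angularDeriv n q) =
          C (n : ℂ)⁻¹ * angularDeriv n (C (c : ℂ) * q) := by
        simp only [angularDeriv, derivative_C_mul]
        ring
      simp_rw [e1, e2, hofReal]
      exact ENNReal.ofReal_le_ofReal
        (integral_posLog_angularDeriv_le hn ((natDegree_C_mul_le _ _).trans hq))) hp
  have e3 : ∀ θ : ℝ, ENNReal.ofReal (‖(angularDeriv n q).eval (circleMap 0 1 θ)‖ ^ p) =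
      ENNReal.ofReal ((n : ℝ) ^ p) * ENNReal.ofReal
        (‖(C (n : ℂ)⁻¹ * angularDeriv n q).eval (circleMap 0 1 θ)‖ ^ p) := fun θ => by
    rw [← ENNReal.ofReal_mul (by positivity), ← mul_rpow (by positivity) (norm_nonneg _), eval_mul,
      eval_C, norm_mul, norm_inv, Complex.norm_natCast, mul_inv_cancel_left₀ hn0]
  simp_rw [e3]
  rw [lintegral_const_mul' _ _ ENNReal.ofReal_ne_top]
  gcongr

lemma hasDerivAt_eval_mvPolynomial {k : ℕ} (P : MvPolynomial (Fin k) ℝ) {c : ℝ → Fin k → ℝ}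
    {c' : Fin k → ℝ} {t : ℝ} (hc : ∀ j, HasDerivAt (fun s => c s j) (c' j) t) :
    HasDerivAt (fun s => MvPolynomial.eval (c s) P)
      (∑ j, MvPolynomial.eval (c t) (MvPolynomial.pderiv j P) * c' j) t := by
  induction P using MvPolynomial.induction_on with
  | C a => simpa using hasDerivAt_const t a
  | add p q hp hq =>
    simp only [map_add, add_mul, Finset.sum_add_distrib]
    exact hp.add hq
  | mul_X p i hp =>
    have h := hp.mul (hc i)
    simp only [map_mul, MvPolynomial.eval_X]
    refine HasDerivAt.congr_deriv h ?_
    symm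
    simp only [Derivation.leibniz, MvPolynomial.pderiv_X, smul_eq_mul, map_add, map_mul,
      MvPolynomial.eval_X, add_mul, Finset.sum_add_distrib, Finset.sum_mul]
    rw [add_comm]
    congr 1
    · exact Finset.sum_congr rfl fun j _ => by ring
    · rw [Finset.sum_eq_single i]
      · simp
      · intro j _ hj
        simp [hj.symm]
      · simp

open Polynomial in
/-- A polynomial of degree `n` restricted to an ellipse is a trigonometric polynomial of degree
`n`. -/
lemma exists_polynomial_eval_ellipse {k n : ℕ} {P : MvPolynomial (Fin k) ℝ}
    (hP : P.totalDegree ≤ n) (x y : Fin k → ℝ) :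
    ∃ q : ℂ[X], q.natDegree ≤ 2 * n ∧ ∀ θ : ℝ,
      q.eval (circleMap 0 1 θ) = circleMap 0 1 θ ^ n *
        (MvPolynomial.eval (fun j => x j * cos θ + y j * sin θ) P : ℂ) := by
  set L : Fin k → ℂ[X] := fun j => C ((x j - Complex.I * y j) / 2) * X ^ 2 +
    C ((x j + Complex.I * y j) / 2) with hL
  have hLdeg : ∀ j, (L j).natDegree ≤ 2 := fun j => by
    refine (natDegree_add_le _ _).trans (max_le (natDegree_C_mul_X_pow_le _ _) ?_)
    simp
  have hLeval : ∀ j (θ : ℝ), (L j).eval (circleMap 0 1 θ) =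
      circleMap 0 1 θ * (x j * cos θ + y j * sin θ : ℝ) := fun j θ => by
    have hz : circleMap 0 1 θ = Complex.cos θ + Complex.sin θ * Complex.I := by
      simp [circleMap, Complex.exp_mul_I]
    have hcs := Complex.cos_sq_add_sin_sq θ
    simp only [hL, eval_add, eval_mul, eval_C, eval_pow, eval_X, hz]
    push_cast
    linear_combination (-(x j + Complex.I * y j) / 2) * hcs +
      (Complex.sin θ ^ 2 * (x j - Complex.I * y j) / 2 - y j * Complex.cos θ * Complex.sin θ)
        * Complex.I_sq
  have hsum : ∀ d ∈ P.support, ∑ i, d i ≤ n := fun d hd => by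
    have := MvPolynomial.le_totalDegree hd
    rw [Finsupp.sum_fintype _ _ fun _ => rfl] at this
    exact this.trans hP
  refine ⟨∑ d ∈ P.support, C ((P.coeff d : ℝ) : ℂ) * (X ^ (n - ∑ i, d i) * ∏ i, L i ^ d i),
    ?_, fun θ => ?_⟩
  · refine natDegree_sum_le_of_forall_le _ _ fun d hd => ?_
    refine (natDegree_C_mul_le _ _).trans (natDegree_mul_le.trans ?_)
    have h1 : (∏ i, L i ^ d i).natDegree ≤ ∑ i, d i * 2 :=
      (natDegree_prod_le _ _).trans (Finset.sum_le_sum fun i _ =>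
        natDegree_pow_le.trans (Nat.mul_le_mul_left _ (hLdeg i)))
    rw [← Finset.sum_mul] at h1
    have h2 := hsum d hd
    rw [natDegree_X_pow]
    omega
  · rw [MvPolynomial.eval_eq', eval_finsetSum]
    push_cast
    rw [Finset.mul_sum]
    refine Finset.sum_congr rfl fun d hd => ?_
    simp only [eval_mul, eval_C, eval_pow, eval_X, eval_prod, hLeval, mul_pow,
      Finset.prod_mul_distrib, Finset.prod_pow_eq_pow_sum]
    rw [← mul_assoc (_ ^ (n - _)), ← pow_add, Nat.sub_add_cancel (hsum d hd)]
    push_cast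
    ring

/-- Bernstein's inequality in `L^p` along an ellipse. -/
lemma lintegral_ellipse_deriv_le {k n : ℕ} (hn : 1 ≤ n) {P : MvPolynomial (Fin k) ℝ}
    (hP : P.totalDegree ≤ n) {p : ℝ} (hp : 0 < p) (x y : Fin k → ℝ) :
    ∫⁻ θ, ENNReal.ofReal (|∑ j, MvPolynomial.eval (fun j => x j * cos θ + y j * sin θ)
        (MvPolynomial.pderiv j P) * (y j * cos θ - x j * sin θ)| ^ p) ∂angleMeasure ≤
      ENNReal.ofReal ((n : ℝ) ^ p) * ∫⁻ θ, ENNReal.ofReal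
        (|MvPolynomial.eval (fun j => x j * cos θ + y j * sin θ) P| ^ p) ∂angleMeasure := by
  obtain ⟨q, hqdeg, hq⟩ := exists_polynomial_eval_ellipse hP x y
  have hnorm : ∀ θ : ℝ, ‖circleMap 0 1 θ‖ = 1 := fun θ => by simp
  have h := lintegral_angularDeriv_rpow_le hn hqdeg hp
  convert h using 4 with θ
  · congr 1
    have hT := hasDerivAt_eval_mvPolynomial P (c := fun θ j => x j * cos θ + y j * sin θ)
      (c' := fun j => y j * cos θ - x j * sin θ) (t := θ) (fun j => by
        refine (((hasDerivAt_cos θ).const_mul (x j)).add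
          ((hasDerivAt_sin θ).const_mul (y j))).congr_deriv ?_
        ring)
    have hz : HasDerivAt (circleMap 0 1) (circleMap 0 1 θ * Complex.I) θ := by
      simpa using hasDerivAt_circleMap 0 1 θ
    have h1 := (q.hasDerivAt (circleMap 0 1 θ)).comp_of_eq θ hz rfl
    have h2 := (hz.pow n).mul hT.ofReal_comp
    have h3 : (Polynomial.eval · q) ∘ circleMap 0 1 = circleMap 0 1 ^ n *
        fun θ : ℝ => (MvPolynomial.eval (fun j => x j * cos θ + y j * sin θ) P : ℂ) := funext hq
    have h4 := h1.unique (h3 ▸ h2)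
    obtain ⟨m, rfl⟩ : ∃ m, n = m + 1 := ⟨n - 1, by omega⟩
    set D := ∑ j, MvPolynomial.eval (fun j => x j * cos θ + y j * sin θ)
        (MvPolynomial.pderiv j P) * (y j * cos θ - x j * sin θ) with hD
    have h5 : (angularDeriv (m + 1) q).eval (circleMap 0 1 θ) =
        -Complex.I * circleMap 0 1 θ ^ (m + 1) * (D : ℂ) := by
      simp only [angularDeriv, Polynomial.eval_sub, Polynomial.eval_mul, Polynomial.eval_X,
        Polynomial.eval_C, hq]
      simp only [Pi.pow_apply, Nat.add_sub_cancel] at h4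
      have hI := Complex.I_sq
      linear_combination (-Complex.I) * h4 + (Polynomial.eval (circleMap 0 1 θ)
        (Polynomial.derivative q) * circleMap 0 1 θ - (m + 1 : ℕ) * circleMap 0 1 θ ^ (m + 1) *
        (MvPolynomial.eval (fun j => x j * cos θ + y j * sin θ) P : ℂ)) * hI
    rw [h5, norm_mul, norm_mul, norm_pow, hnorm, one_pow, mul_one, norm_neg, Complex.norm_I,
      one_mul, Complex.norm_real, norm_eq_abs]
  · congr 1
    rw [hq, norm_mul, norm_pow, hnorm, one_pow, one_mul, Complex.norm_real, norm_eq_abs]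

lemma gaussMeasure_eq_map_stdGaussian (k : ℕ) :
    gaussMeasure k = (stdGaussian (EuclideanSpace ℝ (Fin k))).map
      ((EuclideanSpace.equiv (Fin k) ℝ : EuclideanSpace ℝ (Fin k) ≃L[ℝ] (Fin k → ℝ)) :
        EuclideanSpace ℝ (Fin k) →L[ℝ] (Fin k → ℝ)) := by
  rw [← map_pi_eq_stdGaussian, Measure.map_map (by fun_prop) (by fun_prop)]
  exact Measure.map_id.symm

instance (k : ℕ) : IsGaussian (gaussMeasure k) := by
  rw [gaussMeasure_eq_map_stdGaussian]
  infer_instance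

lemma integral_id_gaussMeasure (k : ℕ) : (gaussMeasure k)[id] = 0 := by
  rw [gaussMeasure_eq_map_stdGaussian, integral_map (by fun_prop) (by fun_prop)]
  simp only [id]
  rw [ContinuousLinearMap.integral_comp_comm _ IsGaussian.integrable_fun_id,
    integral_id_stdGaussian, map_zero]

lemma map_gaussMeasure_sum_mul {k : ℕ} (v : Fin k → ℝ) :
    (gaussMeasure k).map (fun y => ∑ j, v j * y j) =
      (gaussianReal 0 1).map (fun t => √(∑ j, v j ^ 2) * t) := by
  rw [gaussMeasure_eq_map_stdGaussian, Measure.map_map (by fun_prop) (by fun_prop)]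
  have h := IsGaussian.map_eq_gaussianReal (μ := stdGaussian (EuclideanSpace ℝ (Fin k)))
    (innerSL ℝ (WithLp.toLp 2 v))
  rw [integral_strongDual_stdGaussian, variance_dual_stdGaussian, innerSL_apply_norm] at h
  rw [gaussianReal_map_const_mul]
  convert h using 2
  · ext y
    simp [PiLp.inner_apply, mul_comm]
  · simp
  · rw [EuclideanSpace.norm_eq]
    ext
    simp [Real.sq_sqrt (Finset.sum_nonneg fun j _ => sq_nonneg (v j)),
      Finset.sum_nonneg fun j _ => sq_nonneg (v j)]

lemma lintegral_abs_sum_mul_rpow {k : ℕ} (v : Fin k → ℝ) {p : ℝ} :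
    ∫⁻ y, ENNReal.ofReal (|∑ j, v j * y j| ^ p) ∂(gaussMeasure k) =
      ENNReal.ofReal (√(∑ j, v j ^ 2) ^ p) *
        ∫⁻ t, ENNReal.ofReal (|t| ^ p) ∂(gaussianReal 0 1) := by
  have hm : Measurable fun t : ℝ => ENNReal.ofReal (|t| ^ p) := by fun_prop
  have hm' : Measurable fun y : Fin k → ℝ => ∑ j, v j * y j := by fun_prop
  rw [← lintegral_map hm hm', map_gaussMeasure_sum_mul, lintegral_map hm (by fun_prop),
    ← lintegral_const_mul' _ _ ENNReal.ofReal_ne_top]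
  congr 1
  ext t
  rw [← ENNReal.ofReal_mul (by positivity), abs_mul, abs_of_nonneg (sqrt_nonneg _),
    mul_rpow (sqrt_nonneg _) (abs_nonneg _)]

lemma lintegral_gaussMeasure_rotation {k : ℕ} {F : (Fin k → ℝ) × (Fin k → ℝ) → ENNReal}
    (hF : Measurable F) (θ : ℝ) :
    ∫⁻ x, F (fun j => x.1 j * cos θ + x.2 j * sin θ, fun j => x.2 j * cos θ - x.1 j * sin θ)
      ∂((gaussMeasure k).prod (gaussMeasure k)) =
    ∫⁻ x, F x ∂((gaussMeasure k).prod (gaussMeasure k)) := by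
  conv_rhs => rw [← IsGaussian.map_rotation_eq_self (integral_id_gaussMeasure k) θ]
  rw [lintegral_map hF (by fun_prop)]
  congr 1
  ext x
  rw [ContinuousLinearMap.rotation_apply]
  congr 2
  · ext j
    simp [mul_comm]
  · ext j
    simp
    ring

lemma memLp_eval_gaussMeasure {k : ℕ} (P : MvPolynomial (Fin k) ℝ) :
    ∀ q : ENNReal, q ≠ ⊤ → MemLp (fun x => MvPolynomial.eval x P) q (gaussMeasure k) := by
  induction P using MvPolynomial.induction_on with
  | C a => exact fun q _ => by simpa using memLp_const a
  | add p r hp hr =>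
    intro q hq
    simp only [map_add]
    exact (hp q hq).add (hr q hq)
  | mul_X p i hp =>
    intro q hq
    simp only [map_mul, MvPolynomial.eval_X]
    have hi : MemLp (fun x : Fin k → ℝ => x i) (2 * q) (gaussMeasure k) :=
      IsGaussian.memLp_dual (gaussMeasure k) (ContinuousLinearMap.proj i) (2 * q)
        (ENNReal.mul_ne_top (by simp) hq)
    have hpq := hp (2 * q) (ENNReal.mul_ne_top (by simp) hq)
    have : ENNReal.HolderTriple (2 * q) (2 * q) q := ⟨by
      rw [ENNReal.mul_inv (by simp) (by simp), ← add_mul, ENNReal.inv_two_add_inv_two, one_mul]⟩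
    exact hi.mul hpq

lemma integrable_abs_eval_rpow {k : ℕ} (P : MvPolynomial (Fin k) ℝ) {p : ℝ} (hp : 0 < p) :
    Integrable (fun x => |MvPolynomial.eval x P| ^ p) (gaussMeasure k) := by
  have := (memLp_eval_gaussMeasure P (ENNReal.ofReal p) (by simp)).integrable_norm_rpow
    (by simpa using hp) (by simp)
  simpa [ENNReal.toReal_ofReal hp.le] using this

lemma integrable_log_abs_gaussianReal :
    Integrable (fun t : ℝ => log |t|) (gaussianReal 0 1) := by
  have hle : gaussianReal 0 1 ≤ volume := by
    rw [gaussianReal_of_var_ne_zero 0 one_ne_zero]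
    conv_rhs => rw [← withDensity_one (μ := volume)]
    refine withDensity_mono (Filter.Eventually.of_forall fun t => ?_)
    rw [Pi.one_apply, gaussianPDF, gaussianPDFReal, ENNReal.ofReal_le_one]
    refine mul_le_one₀ (inv_le_one_of_one_le₀ ?_) (exp_nonneg _) (exp_le_one_iff.mpr ?_)
    · rw [one_le_sqrt]
      simp
      linarith [pi_gt_three]
    · rw [sub_zero, neg_div, neg_nonpos]
      positivity
  have h1 : IntegrableOn (fun t : ℝ => log |t|) (Set.Ioc (-1) 1) (gaussianReal 0 1) := by
    have := (intervalIntegral.intervalIntegrable_log' (a := -1) (b := 1)).1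
    simp only [log_abs]
    exact this.mono_measure hle
  have h2 : IntegrableOn (fun t : ℝ => log |t|) (Set.Ioc (-1) 1)ᶜ (gaussianReal 0 1) := by
    have hid : Integrable (fun t : ℝ => t) (gaussianReal 0 1) := IsGaussian.integrable_fun_id
    refine Integrable.mono hid.integrableOn
      (measurable_log.comp measurable_id.abs).aestronglyMeasurable ?_
    rw [ae_restrict_iff' measurableSet_Ioc.compl]
    refine Filter.Eventually.of_forall fun t ht => ?_
    have ht1 : 1 ≤ |t| := by
      by_contra! h
      exact ht ⟨(abs_lt.mp h).1, (abs_lt.mp h).2.le⟩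
    rw [norm_of_nonneg (log_nonneg ht1), norm_eq_abs]
    linarith [log_le_sub_one_of_pos (one_pos.trans_le ht1)]
  simpa using h1.union h2

lemma exists_le_lintegral_abs_rpow_gaussianReal :
    ∃ c : ℝ, 0 < c ∧ ∀ p : ℝ, 0 < p → ENNReal.ofReal ((c * √(p + 1)) ^ p) ≤
      ∫⁻ t, ENNReal.ofReal (|t| ^ p) ∂(gaussianReal 0 1) := by
  set Y : ℝ → ℝ := fun t => log |t| - t ^ 2 / 2 with hY
  have hYint : Integrable Y (gaussianReal 0 1) := by
    refine integrable_log_abs_gaussianReal.sub (Integrable.div_const ?_ 2)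
    have := (memLp_id_gaussianReal (μ := 0) (v := 1) 2).integrable_sq
    simpa using this
  set m := ∫ t, Y t ∂(gaussianReal 0 1) with hm
  refine ⟨exp m, exp_pos _, fun p hp => ?_⟩
  have hbd : ∀ t : ℝ, |t| * exp (-(t ^ 2 / 2)) ≤ 1 := fun t => by
    rw [exp_neg, ← div_eq_mul_inv, div_le_one (exp_pos _)]
    have := add_one_le_exp (t ^ 2 / 2)
    nlinarith [sq_nonneg (|t| - 1), sq_abs t]
  have hInt : Integrable (fun t : ℝ => (|t| * exp (-(t ^ 2 / 2))) ^ p) (gaussianReal 0 1) := by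
    refine Integrable.of_bound (C := 1)
      (Continuous.rpow_const (by fun_prop) fun _ => Or.inr hp.le).aestronglyMeasurable
      (Filter.Eventually.of_forall fun t => ?_)
    rw [norm_of_nonneg (by positivity)]
    exact rpow_le_one (by positivity) (hbd t) hp.le
  have hJ : exp (p * m) ≤ ∫ t, (|t| * exp (-(t ^ 2 / 2))) ^ p ∂(gaussianReal 0 1) := by
    have hlin : ∫ t, exp (p * m) * (1 + p * (Y t - m)) ∂(gaussianReal 0 1) = exp (p * m) := by
      have hYm : Integrable (fun t => p * (Y t - m)) (gaussianReal 0 1) :=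
        (hYint.sub (integrable_const _)).const_mul p
      rw [integral_const_mul, integral_add (integrable_const _) hYm, integral_const_mul,
        integral_sub hYint (integrable_const _), ← hm]
      simp
    rw [← hlin]
    refine integral_mono_ae (((integrable_const _).add
      ((hYint.sub (integrable_const _)).const_mul p)).const_mul _) hInt ?_
    have hne : ∀ᵐ t ∂(gaussianReal 0 1), t ≠ 0 := by
      have := nullSingletonClass_gaussianReal (μ := 0) (v := 1) one_ne_zero
      exact Measure.ae_ne _ 0
    filter_upwards [hne] with t ht
    have e : (|t| * exp (-(t ^ 2 / 2))) ^ p = exp (p * m) * exp (p * (Y t - m)) := by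
      rw [← exp_add, rpow_def_of_pos (by positivity), log_mul (by positivity) (exp_pos _).ne',
        log_exp, hY]
      ring_nf
    rw [e]
    gcongr
    linarith [add_one_le_exp (p * (Y t - m))]
  set v : NNReal := (Real.toNNReal (p + 1))⁻¹ with hv
  have hv0 : v ≠ 0 := by
    rw [hv]
    simp
    linarith
  have hvr : (v : ℝ) = (p + 1)⁻¹ := by
    rw [hv, NNReal.coe_inv, Real.coe_toNNReal _ (by linarith)]
  have hp1 : 0 < p + 1 := by linarith
  have hmap : gaussianReal 0 1 = (gaussianReal 0 v).map (fun t => √(p + 1) * t) := by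
    rw [gaussianReal_map_const_mul, mul_zero]
    congr 1
    ext
    simp only [NNReal.coe_one, NNReal.coe_mul, NNReal.coe_mk, hvr]
    rw [sq_sqrt hp1.le, mul_inv_cancel₀ hp1.ne']
  have hmeas : Measurable fun t : ℝ => ENNReal.ofReal (|t| ^ p) := by fun_prop
  have hpdf : ∀ t : ℝ, gaussianPDFReal 0 1 t * exp (-(t ^ 2 / 2)) ^ p ≤
      gaussianPDFReal 0 v t := fun t => by
    rw [gaussianPDFReal, gaussianPDFReal, mul_assoc, hvr, ← exp_mul, ← exp_add]
    have e : -(t - 0) ^ 2 / (2 * ((1 : NNReal) : ℝ)) + -(t ^ 2 / 2) * p =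
        -(t - 0) ^ 2 / (2 * (p + 1)⁻¹) := by
      rw [NNReal.coe_one]
      field_simp
      ring
    rw [e, NNReal.coe_one]
    gcongr
    exact inv_le_one_of_one_le₀ (by linarith)
  calc ENNReal.ofReal ((exp m * √(p + 1)) ^ p)
      = ENNReal.ofReal (√(p + 1) ^ p) * ENNReal.ofReal (exp (p * m)) := by
        rw [← ENNReal.ofReal_mul (by positivity), mul_rpow (exp_pos _).le (sqrt_nonneg _),
          ← exp_mul, mul_comm, mul_comm m]
    _ ≤ ENNReal.ofReal (√(p + 1) ^ p) *
          ∫⁻ t, ENNReal.ofReal ((|t| * exp (-(t ^ 2 / 2))) ^ p) ∂(gaussianReal 0 1) := by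
        gcongr
        rw [← ofReal_integral_eq_lintegral_ofReal hInt
          (Filter.Eventually.of_forall fun t => by positivity)]
        exact ENNReal.ofReal_le_ofReal hJ
    _ ≤ ENNReal.ofReal (√(p + 1) ^ p) * ∫⁻ t, ENNReal.ofReal (|t| ^ p) ∂(gaussianReal 0 v) := by
        refine mul_le_mul_right ?_ _
        rw [gaussianReal_of_var_ne_zero 0 one_ne_zero, gaussianReal_of_var_ne_zero 0 hv0,
          lintegral_withDensity_eq_lintegral_mul _ (measurable_gaussianPDF _ _) (by fun_prop),
          lintegral_withDensity_eq_lintegral_mul _ (measurable_gaussianPDF _ _) hmeas]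
        refine lintegral_mono fun t => ?_
        simp only [Pi.mul_apply, gaussianPDF]
        rw [← ENNReal.ofReal_mul (gaussianPDFReal_nonneg _ _ _),
          ← ENNReal.ofReal_mul (gaussianPDFReal_nonneg _ _ _),
          mul_rpow (abs_nonneg _) (exp_pos _).le]
        refine ENNReal.ofReal_le_ofReal ?_
        calc gaussianPDFReal 0 1 t * (|t| ^ p * exp (-(t ^ 2 / 2)) ^ p)
            = gaussianPDFReal 0 1 t * exp (-(t ^ 2 / 2)) ^ p * |t| ^ p := by ring
          _ ≤ _ := by
            gcongr
            exact hpdf t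
    _ = ∫⁻ t, ENNReal.ofReal (|t| ^ p) ∂(gaussianReal 0 1) := by
        rw [hmap, lintegral_map hmeas (by fun_prop),
          ← lintegral_const_mul' _ _ ENNReal.ofReal_ne_top]
        congr 1
        ext t
        rw [← ENNReal.ofReal_mul (by positivity), abs_mul, abs_of_nonneg (sqrt_nonneg _),
          mul_rpow (sqrt_nonneg _) (abs_nonneg _)]

lemma lintegral_prod_directional_deriv_le {k n : ℕ} (hn : 1 ≤ n) {P : MvPolynomial (Fin k) ℝ}
    (hP : P.totalDegree ≤ n) {p : ℝ} (hp : 0 < p) :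
    ∫⁻ x, ENNReal.ofReal (|∑ j, MvPolynomial.eval x.1 (MvPolynomial.pderiv j P) * x.2 j| ^ p)
        ∂((gaussMeasure k).prod (gaussMeasure k)) ≤
      ENNReal.ofReal ((n : ℝ) ^ p) *
        ∫⁻ x, ENNReal.ofReal (|MvPolynomial.eval x.1 P| ^ p)
          ∂((gaussMeasure k).prod (gaussMeasure k)) := by
  set ν := (gaussMeasure k).prod (gaussMeasure k) with hν
  have hev : ∀ Q : MvPolynomial (Fin k) ℝ, Measurable fun x => MvPolynomial.eval x Q :=
    fun Q => Q.continuous_eval.measurable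
  set F : (Fin k → ℝ) × (Fin k → ℝ) → ENNReal := fun x =>
    ENNReal.ofReal (|∑ j, MvPolynomial.eval x.1 (MvPolynomial.pderiv j P) * x.2 j| ^ p) with hF
  set G : (Fin k → ℝ) × (Fin k → ℝ) → ENNReal := fun x =>
    ENNReal.ofReal (|MvPolynomial.eval x.1 P| ^ p) with hG
  have hFm : Measurable F := by
    have : ∀ j, Measurable fun x : (Fin k → ℝ) × (Fin k → ℝ) =>
        MvPolynomial.eval x.1 (MvPolynomial.pderiv j P) := fun j => (hev _).comp measurable_fst
    fun_prop
  have hGm : Measurable G := by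
    have : Measurable fun x : (Fin k → ℝ) × (Fin k → ℝ) => MvPolynomial.eval x.1 P :=
      (hev _).comp measurable_fst
    fun_prop
  have hrot : ∀ H : (Fin k → ℝ) × (Fin k → ℝ) → ENNReal, Measurable H →
      ∫⁻ x, ∫⁻ θ, H (fun j => x.1 j * cos θ + x.2 j * sin θ,
        fun j => x.2 j * cos θ - x.1 j * sin θ) ∂angleMeasure ∂ν =
      (∫⁻ x, H x ∂ν) * angleMeasure Set.univ := fun H hH => by
    rw [lintegral_lintegral_swap]
    · simp_rw [hν, lintegral_gaussMeasure_rotation hH, lintegral_const]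
    · refine (hH.comp ?_).aemeasurable
      fun_prop
  have hA0 : angleMeasure Set.univ ≠ 0 := fun h => by
    have := angleMeasure_real_univ
    rw [Measure.real, h] at this
    simp [pi_ne_zero] at this
  refine (ENNReal.mul_le_mul_iff_left hA0 (measure_ne_top _ _)).1 ?_
  rw [mul_assoc, ← hrot F hFm, ← hrot G hGm, ← lintegral_const_mul' _ _ ENNReal.ofReal_ne_top]
  exact lintegral_mono fun x => lintegral_ellipse_deriv_le hn hP hp x.1 x.2

lemma lintegral_gradNorm_rpow_mul_le {k n : ℕ} (hn : 1 ≤ n) {P : MvPolynomial (Fin k) ℝ}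
    (hP : P.totalDegree ≤ n) {p : ℝ} (hp : 0 < p) :
    (∫⁻ x, ENNReal.ofReal (gradNorm P x ^ p) ∂(gaussMeasure k)) *
        ∫⁻ t, ENNReal.ofReal (|t| ^ p) ∂(gaussianReal 0 1) ≤
      ENNReal.ofReal ((n : ℝ) ^ p) *
        ∫⁻ x, ENNReal.ofReal (|MvPolynomial.eval x P| ^ p) ∂(gaussMeasure k) := by
  have hev : ∀ Q : MvPolynomial (Fin k) ℝ, Measurable fun x => MvPolynomial.eval x Q :=
    fun Q => Q.continuous_eval.measurable
  have h := lintegral_prod_directional_deriv_le hn hP hp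
  rw [lintegral_prod, lintegral_prod] at h
  · simp only [lintegral_abs_sum_mul_rpow, lintegral_const, measure_univ, mul_one] at h
    rwa [lintegral_mul_const] at h
    have := fun j => hev (MvPolynomial.pderiv j P)
    fun_prop
  · have : Measurable fun x : (Fin k → ℝ) × (Fin k → ℝ) => MvPolynomial.eval x.1 P :=
      (hev _).comp measurable_fst
    fun_prop
  · have : ∀ j, Measurable fun x : (Fin k → ℝ) × (Fin k → ℝ) =>
        MvPolynomial.eval x.1 (MvPolynomial.pderiv j P) := fun j => (hev _).comp measurable_fst
    fun_prop

lemma lpNormGauss_gradNorm_of_totalDegree_eq_zero {k : ℕ} {P : MvPolynomial (Fin k) ℝ}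
    (hP : P.totalDegree = 0) {p : ℝ} (hp : 0 < p) : lpNormGauss p (gradNorm P) = 0 := by
  rw [MvPolynomial.totalDegree_eq_zero_iff_eq_C.1 hP]
  simp [lpNormGauss, gradNorm, zero_rpow hp.ne', zero_rpow (inv_pos.2 hp).ne']

lemma mul_lpNormGauss_gradNorm_le {k n : ℕ} (hn : 1 ≤ n) {P : MvPolynomial (Fin k) ℝ}
    (hP : P.totalDegree ≤ n) {p : ℝ} (hp : 0 < p) {a : ℝ} (ha : 0 < a)
    (hap : ENNReal.ofReal (a ^ p) ≤ ∫⁻ t, ENNReal.ofReal (|t| ^ p) ∂(gaussianReal 0 1)) :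
    a * lpNormGauss p (gradNorm P) ≤ n * lpNormGauss p fun x => MvPolynomial.eval x P := by
  have hev : ∀ Q : MvPolynomial (Fin k) ℝ, Measurable fun x => MvPolynomial.eval x Q :=
    fun Q => Q.continuous_eval.measurable
  have hgrad : ∀ x, |gradNorm P x| = gradNorm P x := fun x => abs_of_nonneg (sqrt_nonneg _)
  have hgm : Measurable (gradNorm P) := by
    have := fun j => hev (MvPolynomial.pderiv j P)
    unfold gradNorm
    fun_prop
  set A := ∫ x, |gradNorm P x| ^ p ∂(gaussMeasure k) with hA
  set B := ∫ x, |MvPolynomial.eval x P| ^ p ∂(gaussMeasure k) with hB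
  have hA0 : 0 ≤ A := integral_nonneg fun x => by positivity
  have hB0 : 0 ≤ B := integral_nonneg fun x => by positivity
  have key : a ^ p * A ≤ n ^ p * B := by
    have h := (mul_le_mul_right hap _).trans (lintegral_gradNorm_rpow_mul_le hn hP hp)
    rw [← ofReal_integral_eq_lintegral_ofReal (integrable_abs_eval_rpow P hp)
      (Filter.Eventually.of_forall fun t => by positivity), ← hB,
      ← ENNReal.ofReal_mul (by positivity)] at h
    have h' := ENNReal.toReal_mono ENNReal.ofReal_ne_top h
    rw [ENNReal.toReal_mul, ENNReal.toReal_ofReal (by positivity),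
      ENNReal.toReal_ofReal (by positivity), mul_comm] at h'
    rw [hA]
    simp_rw [hgrad]
    rwa [integral_eq_lintegral_of_nonneg_ae
      (Filter.Eventually.of_forall fun x =>
        rpow_nonneg (show 0 ≤ gradNorm P x from sqrt_nonneg _) p)
      (hgm.pow_const p).aestronglyMeasurable]
  have h := rpow_le_rpow (by positivity) key (one_div_nonneg.2 hp.le)
  rwa [mul_rpow (by positivity) hA0, mul_rpow (by positivity) hB0, ← rpow_mul ha.le,
    ← rpow_mul (Nat.cast_nonneg n), mul_one_div_cancel hp.ne', rpow_one, rpow_one] at h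

/-- Dimension independent Bernstein–Markov inequality with linear dependence on the degree. -/
theorem bernstein_markov_linear :
    ∃ C : ℝ, 0 < C ∧ ∀ k : ℕ, 1 ≤ k → ∀ p : ℝ, 0 < p → ∀ P : MvPolynomial (Fin k) ℝ,
      lpNormGauss p (gradNorm P) ≤
        C * ((P.totalDegree : ℝ) / Real.sqrt (p + 1)) *
          lpNormGauss p (fun x => MvPolynomial.eval x P) := by
  obtain ⟨c, hc, hcp⟩ := exists_le_lintegral_abs_rpow_gaussianReal
  refine ⟨c⁻¹, inv_pos.2 hc, fun k _ p hp P => ?_⟩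
  rcases Nat.eq_zero_or_pos P.totalDegree with h0 | h0
  · simp [lpNormGauss_gradNorm_of_totalDegree_eq_zero h0 hp, h0]
  have hs : 0 < √(p + 1) := sqrt_pos.2 (by linarith)
  have h := mul_lpNormGauss_gradNorm_le h0 le_rfl hp (mul_pos hc hs) (hcp p hp)
  rw [← div_eq_inv_mul, div_div, div_mul_eq_mul_div, le_div_iff₀ (by positivity)]
  linarith
end
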